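/- arXiv:1502.01413 — 7 statements merged into one kernel-verified Lean document; each statement's English description precedes it below -/
import Mathlib

section
/- Let a > 0, λ ∈ [0,1], and let (X,Y) have the bivariate Poisson density φ_{X,Y}(x,y) = φ_X(x) φ_Y(y) Σ_{n=0}^∞ λ^n C_n(x;a) C_n(y;a) for x, y ∈ ℕ₀, where φ_X(k) = φ_Y(k) = a^k e^{−a}/k!. Then V²(X,Y) = Σ_{j,k=1}^∞ [4^{j+k−1}/(j! k!)] (λa)^{j+k} A_{jk}², where for j ≥ k, A_{jk} = (1/(j−1)!) Σ_{ℓ=0}^{⌊(j−k)/2⌋} C(j−k, 2ℓ) (−1)^ℓ (1/2)_ℓ (1/2)_{j−ℓ−1} ₁F₁(j−ℓ−1/2; j; −4a), and A_{jk} = A_{kj} for j < k; moreover this double series converges absolutely, with V²(X,Y) ≤ (exp(4λa) − 1)². -/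
/-!
Write `z = e^{is}`, `w = e^{it}`. Summing the Poisson density against a Charlier polynomial gives
`∑ₓ zˣ φ_X(x) C_n(x;a) = (aⁿ/n!)^{1/2} (1-z)ⁿ e^{a(z-1)}`, so after exchanging sums (legitimate for
all `λ ∈ [0,1]` by the crude bound `E|C_n(X)| ≤ (4ⁿaⁿ/n!)^{1/2}`) the joint characteristic function
is `e^{a(z-1)} e^{a(w-1)} e^{λa(1-z)(1-w)}` (`jointCFNat_bivariate_poisson`).

Hence the integrand of `V²` is
`|e^{a(z-1)}|² |e^{a(w-1)}|² |e^{λa(1-z)(1-w)} - 1|² / (s²t²)`. Expanding the last factor as the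
product of an exponential series and its conjugate gives a double series, indexed by `j, k ≥ 1`,
with coefficients `(λa)^{j+k}/(j!k!)`, whose terms are products `h_{jk}(s) h_{jk}(t)` with
`h_{jk}(s) = |e^{a(z-1)}|² (1-z)^j (1-z̄)^k / s²` (`hasSum_integrand`). Termwise integration is
justified by the bound `|1-z| ≤ 2` (`hasSum_dcovNat`), and `V²` becomes
`π⁻² ∑ (λa)^{j+k}/(j!k!) (∫ h_{jk})²`.

To evaluate `∫ h_{jk}`, factor out the kernel `|1-z|²/s² = (2 - 2 cos s)/s²`. Its translates by
`2πℤ` sum to `1`, by `∑ₙ 1/(x+n)² = π²/sin²(πx)` (the derivative of the cotangent expansion), so the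
integral over `ℝ` of the kernel times a `2π`-periodic function is the integral of that function over
one period (`integral_kernel_mul`). On a period, the substitution `s = 2θ` and the binomial theorem
reduce the integral to `∫₀^π sin^{2p}θ cos^{2ℓ}θ e^{-4a sin²θ} dθ`, which expands into Wallis (Beta)
integrals and sums to a `₁F₁`; the odd powers of the cosine vanish by symmetry. The outcome is
`∫ h_{jk} = 2^{j+k-1} π A_{jk}` (`integral_periodicFactor`).

The same integral representation gives `|A_{jk}| ≤ 1`, and the upper bound for `V²` follows by
comparison with the square of the series of `e^{4λa} - 1`.

In the declarations below the indices `j, k ≥ 1` are written `J + 1`, `K + 1` with `J, K : ℕ`.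
-/

open MeasureTheory

/-- The rising factorial `(a)_n = a(a+1)⋯(a+n−1)`. -/
noncomputable def poch (a : ℝ) (n : ℕ) : ℝ := (ascPochhammer ℝ n).eval a

/-- The Poisson–Charlier polynomial of degree `n`:
`C_n(x;a) = (a^n/n!)^{1/2} Σ_{k=0}^n (−1)^k C(n,k) C(x,k) k!/a^k`. -/
noncomputable def charlier (a : ℝ) (n x : ℕ) : ℝ :=
  Real.sqrt (a ^ n / Nat.factorial n) *
    ∑ k ∈ Finset.range (n + 1),
      (-1 : ℝ) ^ k * (Nat.choose n k) * (Nat.choose x k) * (Nat.factorial k) / a ^ k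

/-- The Poisson density with parameter `a`. -/
noncomputable def poissonDensity (a : ℝ) (k : ℕ) : ℝ :=
  a ^ k * Real.exp (-a) / Nat.factorial k

/-- Joint characteristic function of a pair of `ℕ`-valued random variables with joint
density `φ` (with respect to counting measure). -/
noncomputable def jointCFNat (φ : ℕ → ℕ → ℝ) (s t : ℝ) : ℂ :=
  ∑' xy : ℕ × ℕ, Complex.exp (Complex.I * (s * xy.1 + t * xy.2)) * (φ xy.1 xy.2 : ℝ)

/-- Squared distance covariance `V²(X,Y)` of a pair of `ℕ`-valued random variables with
joint density `φ`; here `γ₁ = π`. -/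
noncomputable def dcovNat (φ : ℕ → ℕ → ℝ) : ℝ :=
  (Real.pi * Real.pi)⁻¹ *
    ∫ w : ℝ × ℝ, ‖jointCFNat φ w.1 w.2 - jointCFNat φ w.1 0 * jointCFNat φ 0 w.2‖ ^ 2 /
      (w.1 ^ 2 * w.2 ^ 2)

/-- The confluent hypergeometric function `₁F₁(a;b;z) = Σ_n (a)_n z^n/((b)_n n!)`. -/
noncomputable def hyp1F1 (a b z : ℝ) : ℝ :=
  ∑' n : ℕ, poch a n * z ^ n / (poch b n * Nat.factorial n)

/-- The coefficient `A_{jk}` (for `j ≥ k`) in the distance covariance of the bivariate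
Poisson distribution. -/
noncomputable def poisA₀ (a : ℝ) (j k : ℕ) : ℝ :=
  (1 / (Nat.factorial (j - 1) : ℝ)) *
    ∑ l ∈ Finset.range ((j - k) / 2 + 1),
      (Nat.choose (j - k) (2 * l) : ℝ) * (-1 : ℝ) ^ l * poch (1/2) l *
        poch (1/2) (j - l - 1) * hyp1F1 ((j : ℝ) - l - 1/2) (j : ℝ) (-(4 * a))

/-- `A_{jk}`, symmetrized: `A_{jk} = A_{kj}` for `j < k`. -/
noncomputable def poisA (a : ℝ) (j k : ℕ) : ℝ :=
  if k ≤ j then poisA₀ a j k else poisA₀ a k j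

/-! ### Partial fractions of `π²/sin²(πx)` -/

/-- Derivative, term by term, of the Mittag-Leffler expansion of the cotangent on `(0,1)`. -/
lemma tsum_inv_sq_add_inv_sq {x : ℝ} (hx : x ∈ Set.Ioo (0 : ℝ) 1) :
    ∑' n : ℕ, (1 / (x - (n + 1)) ^ 2 + 1 / (x + (n + 1)) ^ 2) =
      Real.pi ^ 2 / Real.sin (Real.pi * x) ^ 2 - 1 / x ^ 2 := by
  obtain ⟨b, hxb, hb1⟩ := exists_between hx.2
  have hx0 := hx.1
  -- the series is differentiated on `(0, b)` with `x < b < 1`, away from the pole at `1`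
  have hu : Summable (fun n : ℕ => 1 / ((n : ℝ) + (1 - b)) ^ 2 + 1 / ((n : ℝ) + 1) ^ 2) := by
    have key : ∀ c : ℝ, 0 < c → Summable (fun n : ℕ => 1 / ((n : ℝ) + c) ^ 2) := by
      intro c hc
      have := (Real.summable_one_div_nat_add_rpow c 2).2 (by norm_num)
      refine this.congr fun n => ?_
      have : (0 : ℝ) ≤ n + c := by positivity
      rw [abs_of_nonneg this]; norm_cast
    exact (key _ (by linarith)).add (key 1 one_pos)
  have hsub : ∀ y ∈ Set.Ioo (0 : ℝ) b, ∀ n : ℕ, y - ((n : ℝ) + 1) < 0 := by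
    intro y hy n
    have : (0 : ℝ) ≤ n := n.cast_nonneg
    linarith [hy.2]
  have hadd : ∀ y ∈ Set.Ioo (0 : ℝ) b, ∀ n : ℕ, 0 < y + ((n : ℝ) + 1) := by
    intro y hy n
    have : (0 : ℝ) ≤ n := n.cast_nonneg
    linarith [hy.1]
  have hmem : ∀ y ∈ Set.Ioo (0 : ℝ) b, (y : ℂ) ∈ Complex.integerComplement := by
    rintro y hy ⟨m, hm⟩
    have hm' : (m : ℝ) = y := by exact_mod_cast hm
    have h1 : (0 : ℝ) < m := by rw [hm']; exact hy.1
    have h2 : (m : ℝ) < 1 := by rw [hm']; linarith [hy.2]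
    have h3 : (0 : ℤ) < m := by exact_mod_cast h1
    have h4 : m < (1 : ℤ) := by exact_mod_cast h2
    omega
  have hcot : ∀ y ∈ Set.Ioo (0 : ℝ) b,
      ∑' n : ℕ, (1 / (y - ((n : ℝ) + 1)) + 1 / (y + ((n : ℝ) + 1))) =
        Real.pi * (Real.cos (Real.pi * y) / Real.sin (Real.pi * y)) - 1 / y := by
    intro y hy
    have h := cot_series_rep' (hmem y hy)
    rw [Complex.cot] at h
    have h' : ((Real.pi * (Real.cos (Real.pi * y) / Real.sin (Real.pi * y)) - 1 / y : ℝ) : ℂ) =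
        ((∑' n : ℕ, (1 / (y - ((n : ℝ) + 1)) + 1 / (y + ((n : ℝ) + 1))) : ℝ) : ℂ) := by
      push_cast
      exact h
    exact (Complex.ofReal_injective h').symm
  have hsum : Summable (fun n : ℕ => (1 / (x - ((n : ℝ) + 1)) + 1 / (x + ((n : ℝ) + 1)))) := by
    have h := summable_cotTerm (hmem x ⟨hx0, hxb⟩)
    rw [← Complex.summable_ofReal]
    refine h.congr fun n => ?_
    simp only [cotTerm]
    push_cast
    rfl
  have hd := hasDerivAt_tsum_of_isPreconnected (𝕜 := ℝ) (t := Set.Ioo (0 : ℝ) b)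
    (g := fun (n : ℕ) (y : ℝ) => (1 / (y - ((n : ℝ) + 1)) + 1 / (y + ((n : ℝ) + 1))))
    (g' := fun (n : ℕ) (y : ℝ) => -(1 / (y - ((n : ℝ) + 1)) ^ 2 + 1 / (y + ((n : ℝ) + 1)) ^ 2))
    (y₀ := x) (y := x) hu isOpen_Ioo isPreconnected_Ioo ?_ ?_ ⟨hx0, hxb⟩ hsum ⟨hx0, hxb⟩
  · have hs : 0 < Real.sin (Real.pi * x) := by
      apply Real.sin_pos_of_pos_of_lt_pi
      · have := Real.pi_pos; positivity
      · nlinarith [Real.pi_pos, hx.2]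
    have hd2 : HasDerivAt (fun y : ℝ =>
        Real.pi * (Real.cos (Real.pi * y) / Real.sin (Real.pi * y)) - 1 / y)
        (-(Real.pi ^ 2 / Real.sin (Real.pi * x) ^ 2 - 1 / x ^ 2)) x := by
      have hl : HasDerivAt (fun y : ℝ => Real.pi * y) Real.pi x := by
        simpa using (hasDerivAt_id x).const_mul Real.pi
      have h1 := ((hl.cos.div hl.sin hs.ne').const_mul Real.pi).sub (hasDerivAt_inv hx0.ne')
      have hfun : (fun y : ℝ =>
        Real.pi * (Real.cos (Real.pi * y) / Real.sin (Real.pi * y)) - 1 / y) =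
        ((fun y : ℝ => Real.pi * ((fun y => Real.cos (Real.pi * y)) /
          (fun y => Real.sin (Real.pi * y))) y) - fun y => y⁻¹) := by
        funext y; simp
      rw [hfun]
      refine h1.congr_deriv ?_
      have := Real.sin_sq_add_cos_sq (Real.pi * x)
      have hs' := hs.ne'
      have hx' := hx0.ne'
      field_simp
      linear_combination (-Real.pi ^ 2 * x ^ 2) * this
    have heq := hd.unique (hd2.congr_of_eventuallyEq
      (Filter.eventuallyEq_of_mem (isOpen_Ioo.mem_nhds ⟨hx0, hxb⟩) hcot))
    rw [tsum_neg] at heq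
    exact neg_injective heq
  · intro n y hy
    have h1 := (hasDerivAt_id y).sub_const ((n : ℝ) + 1) |>.inv (hsub y hy n).ne
    have h2 := (hasDerivAt_id y).add_const ((n : ℝ) + 1) |>.inv (hadd y hy n).ne'
    convert h1.add h2 using 1
    · funext z; simp
    · simp; ring
  · intro n y hy
    have hn : (0 : ℝ) ≤ n := n.cast_nonneg
    rw [norm_neg, Real.norm_of_nonneg (by positivity)]
    have h1 : 0 < (n : ℝ) + (1 - b) := by linarith
    refine add_le_add ?_ ?_
    · apply one_div_le_one_div_of_le (by positivity)
      nlinarith [hy.1, hy.2]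
    · apply one_div_le_one_div_of_le (by positivity)
      nlinarith [hy.1, hy.2]

/-- The partial fraction expansion `∑_{n ∈ ℤ} 1/(x+n)² = π²/sin²(πx)` on `(0,1)`. -/
lemma hasSum_int_inv_sq {x : ℝ} (hx : x ∈ Set.Ioo (0 : ℝ) 1) :
    HasSum (fun n : ℤ => 1 / (x + n) ^ 2) (Real.pi ^ 2 / Real.sin (Real.pi * x) ^ 2) := by
  have hsumm : Summable (fun n : ℤ => 1 / (x + n) ^ 2) := by
    have := (Real.summable_one_div_int_add_rpow x 2).2 (by norm_num)
    refine this.congr fun n => ?_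
    rw [add_comm x, ← sq_abs (_ + x)]; norm_cast
  have h1 : Summable (fun n : ℕ => 1 / (x - (n + 1)) ^ 2) := by
    have := hsumm.comp_injective (i := fun n : ℕ => -((n : ℤ) + 1)) (fun a b h => by simpa using h)
    refine this.congr fun n => ?_
    simp only [Function.comp]; push_cast; ring
  have h2 : Summable (fun n : ℕ => 1 / (x + (n + 1)) ^ 2) := by
    have := hsumm.comp_injective (i := fun n : ℕ => ((n : ℤ) + 1)) (fun a b h => by simpa using h)
    refine this.congr fun n => ?_
    simp only [Function.comp]; push_cast; ring
  have h3 := tsum_inv_sq_add_inv_sq hx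
  rw [h1.tsum_add h2] at h3
  have h4 : HasSum (fun n : ℕ => 1 / (x + n) ^ 2)
      (1 / x ^ 2 + ∑' n : ℕ, 1 / (x + (n + 1)) ^ 2) := by
    rw [← hasSum_nat_add_iff' 1]
    simpa using h2.hasSum
  have h5 := HasSum.of_nat_of_neg_add_one (f := fun n : ℤ => 1 / (x + n) ^ 2)
    (m := (1 / x ^ 2 + ∑' n : ℕ, 1 / (x + (n + 1)) ^ 2))
    (m' := ∑' n : ℕ, 1 / (x - (n + 1)) ^ 2) (by simpa using h4) (by
      convert h1.hasSum using 1
      funext n; push_cast; ring)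
  convert h5 using 1
  linarith

/-! ### Periodization of the kernel `(2 - 2 cos s)/s²` -/

lemma two_sub_two_cos_nonneg (s : ℝ) : 0 ≤ 2 - 2 * Real.cos s := by
  linarith [Real.cos_le_one s]

lemma two_sub_two_cos_div_sq_le (s : ℝ) : (2 - 2 * Real.cos s) / s ^ 2 ≤ 5 * (1 + s ^ 2)⁻¹ := by
  rcases eq_or_ne s 0 with rfl | hs
  · norm_num
  · have h1 := Real.one_sub_sq_div_two_le_cos (x := s)
    have h2 := Real.neg_one_le_cos s
    have hs2 : 0 < s ^ 2 := by positivity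
    rw [← div_eq_mul_inv, div_le_div_iff₀ hs2 (by positivity)]
    nlinarith [mul_nonneg hs2.le (by linarith : 0 ≤ 1 + Real.cos s)]

lemma integrable_kernel_mul {g : ℝ → ℂ} (hg : Continuous g) {C : ℝ} (hC : ∀ s, ‖g s‖ ≤ C) :
    Integrable (fun s : ℝ => g s * (((2 - 2 * Real.cos s) / s ^ 2 : ℝ) : ℂ)) := by
  have hC0 : 0 ≤ C := (norm_nonneg _).trans (hC 0)
  refine Integrable.mono' (g := fun s => C * (5 * (1 + s ^ 2)⁻¹))
    ((integrable_inv_one_add_sq.const_mul 5).const_mul C) ?_ ?_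
  · refine (hg.measurable.mul (Complex.measurable_ofReal.comp ?_)).aestronglyMeasurable
    fun_prop
  · refine Filter.Eventually.of_forall fun s => ?_
    rw [norm_mul, Complex.norm_real, Real.norm_of_nonneg
      (div_nonneg (two_sub_two_cos_nonneg s) (sq_nonneg s))]
    exact mul_le_mul (hC s) (two_sub_two_cos_div_sq_le s)
      (div_nonneg (two_sub_two_cos_nonneg s) (sq_nonneg s)) hC0

/-- Periodization: the kernel `|1 - e^{is}|² / s²` on the line folds to Lebesgue measure on
one period, because its translates by `2πℤ` sum to `1`. -/
lemma integral_kernel_mul {g : ℝ → ℂ} (hg : Continuous g) {C : ℝ} (hC : ∀ s, ‖g s‖ ≤ C)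
    (hper : Function.Periodic g (2 * Real.pi)) :
    ∫ s : ℝ, g s * (((2 - 2 * Real.cos s) / s ^ 2 : ℝ) : ℂ) = ∫ s in (0 : ℝ)..2 * Real.pi, g s := by
  have hpi := Real.pi_pos
  have hkg := integrable_kernel_mul hg hC
  set F : ℝ → ℂ := fun s => g s * (((2 - 2 * Real.cos s) / s ^ 2 : ℝ) : ℂ) with hF
  set f : ℝ → ℂ := fun x => F (2 * Real.pi * x) with hf
  have hfint : Integrable f := hkg.comp_mul_left' (by positivity)
  have hscale : ∫ s, F s = ((2 * Real.pi : ℝ) : ℂ) * ∫ x, f x := by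
    have := Measure.integral_comp_mul_left F (2 * Real.pi)
    rw [hf, this, abs_of_pos (by positivity), Complex.real_smul, ← mul_assoc, ← Complex.ofReal_mul,
      mul_inv_cancel₀ (by positivity)]
    simp
  have hscale2 : ∫ s in (0 : ℝ)..2 * Real.pi, g s =
      ((2 * Real.pi : ℝ) : ℂ) * ∫ x in (0 : ℝ)..1, g (2 * Real.pi * x) := by
    have := intervalIntegral.smul_integral_comp_mul_left (a := 0) (b := 1) g (2 * Real.pi)
    rw [← Complex.real_smul, this]
    simp
  rw [hscale, hscale2]
  congr 1
  have h1 := hfint.hasSum_intervalIntegral_comp_add_int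
  have h2 := hfint.norm.hasSum_intervalIntegral_comp_add_int
  simp only [intervalIntegral.integral_of_le zero_le_one] at h1 h2 ⊢
  have h3 := hasSum_integral_of_summable_integral_norm
    (μ := volume.restrict (Set.Ioc (0 : ℝ) 1)) (F := fun (n : ℤ) x => f (x + n))
    (fun n => (hfint.comp_add_right (n : ℝ)).integrableOn) h2.summable
  rw [h1.unique h3]
  rw [integral_Ioc_eq_integral_Ioo, integral_Ioc_eq_integral_Ioo]
  refine setIntegral_congr_fun measurableSet_Ioo fun x hx => ?_
  have hs : 0 < Real.sin (Real.pi * x) := by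
    apply Real.sin_pos_of_pos_of_lt_pi
    · have := hx.1; positivity
    · nlinarith [hx.2]
  have hterm : ∀ n : ℤ, f (x + n) = g (2 * Real.pi * x) *
      (((4 * Real.sin (Real.pi * x) ^ 2 / (2 * Real.pi) ^ 2) * (1 / (x + n) ^ 2) : ℝ) : ℂ) := by
    intro n
    have e1 : 2 * Real.pi * (x + n) = 2 * Real.pi * x + n * (2 * Real.pi) := by ring
    have e2 : Real.cos (2 * Real.pi * x) = 1 - 2 * Real.sin (Real.pi * x) ^ 2 := by
      rw [mul_assoc, Real.cos_two_mul, Real.sin_sq]; ring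
    have e3 : g (2 * Real.pi * (x + n)) = g (2 * Real.pi * x) := by
      rw [e1]; exact hper.int_mul n _
    have e4 : Real.cos (2 * Real.pi * (x + n)) = Real.cos (2 * Real.pi * x) := by
      rw [e1]; exact Real.cos_add_int_mul_two_pi _ n
    simp only [hf, hF]
    rw [e3, e4, e2]
    congr 2
    rw [mul_pow (2 * Real.pi), div_mul_div_comm]
    ring
  have h4 : HasSum (fun n : ℤ => f (x + n)) (g (2 * Real.pi * x)) := by
    simp only [hterm]
    have := (hasSum_int_inv_sq hx).mul_left (4 * Real.sin (Real.pi * x) ^ 2 / (2 * Real.pi) ^ 2)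
    have h5 := (Complex.hasSum_ofReal.2 this).mul_left (g (2 * Real.pi * x))
    have h6 : 4 * Real.sin (Real.pi * x) ^ 2 / (2 * Real.pi) ^ 2 *
        (Real.pi ^ 2 / Real.sin (Real.pi * x) ^ 2) = 1 := by
      field_simp; norm_num
    rw [h6, Complex.ofReal_one, mul_one] at h5
    exact h5
  exact h4.tsum_eq

/-! ### Half-integer Beta integrals and `₁F₁` -/

lemma poch_succ (a : ℝ) (n : ℕ) : poch a (n + 1) = poch a n * (a + n) := by
  simp [poch, ascPochhammer_succ_eval]

lemma poch_zero (a : ℝ) : poch a 0 = 1 := by simp [poch]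

lemma poch_add (a : ℝ) (m n : ℕ) : poch a (m + n) = poch a m * poch (a + m) n := by
  induction n with
  | zero => simp [poch_zero]
  | succ n ih => rw [← add_assoc, poch_succ, poch_succ, ih]; push_cast; ring

lemma poch_nat_succ (m n : ℕ) :
    poch ((m + 1 : ℕ) : ℝ) n * (m.factorial : ℝ) = ((m + n).factorial : ℝ) := by
  induction n with
  | zero => simp [poch_zero]
  | succ n ih =>
    rw [poch_succ, ← add_assoc, Nat.factorial_succ, Nat.cast_mul, ← ih]; push_cast; ring

/-- Even Wallis integrals in terms of rising factorials (Beta function at half-integers). -/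
lemma integral_sin_pow_mul_cos_pow (l : ℕ) : ∀ p : ℕ,
    ∫ x in (0 : ℝ)..Real.pi, Real.sin x ^ (2 * p) * Real.cos x ^ (2 * l) =
      Real.pi * poch (1/2) p * poch (1/2) l / ((p + l).factorial : ℝ) := by
  induction l with
  | zero =>
    intro p
    simp only [mul_zero, pow_zero, mul_one, integral_sin_pow_even, poch_zero, add_zero]
    rw [mul_div_assoc]
    congr 1
    induction p with
    | zero => simp [poch_zero]
    | succ p ih =>
      rw [Finset.prod_range_succ, ih, poch_succ, Nat.factorial_succ]
      push_cast
      field_simp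
      ring
  | succ l ih =>
    intro p
    -- `cos² = 1 - sin²` lowers the exponent of the cosine
    have h : ∀ x : ℝ, Real.sin x ^ (2 * p) * Real.cos x ^ (2 * (l + 1)) =
        Real.sin x ^ (2 * p) * Real.cos x ^ (2 * l) -
          Real.sin x ^ (2 * (p + 1)) * Real.cos x ^ (2 * l) := by
      intro x
      rw [mul_add 2 l, pow_add _ (2 * l), mul_one, Real.cos_sq']; ring
    simp only [h]
    rw [intervalIntegral.integral_sub (Continuous.intervalIntegrable (by fun_prop) _ _)
      (Continuous.intervalIntegrable (by fun_prop) _ _), ih, ih, poch_succ, poch_succ,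
      show p + 1 + l = p + l + 1 by ring, ← add_assoc, Nat.factorial_succ]
    push_cast
    field_simp
    ring

/-- Euler-type integral for the confluent hypergeometric function at half-integer parameters. -/
lemma integral_sin_cos_exp (a : ℝ) (p l : ℕ) :
    ∫ x in (0 : ℝ)..Real.pi, Real.sin x ^ (2 * p) * Real.cos x ^ (2 * l) *
        Real.exp (-(4 * a) * Real.sin x ^ 2) =
      Real.pi * poch (1/2) p * poch (1/2) l / ((p + l).factorial : ℝ) *
        hyp1F1 ((p : ℝ) + 1/2) ((p + l + 1 : ℕ) : ℝ) (-(4 * a)) := by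
  have hs : HasSum (fun n : ℕ => ∫ x in (0 : ℝ)..Real.pi,
      Real.sin x ^ (2 * p) * Real.cos x ^ (2 * l) *
        ((-(4 * a) * Real.sin x ^ 2) ^ n / (n.factorial : ℝ)))
      (∫ x in (0 : ℝ)..Real.pi, Real.sin x ^ (2 * p) * Real.cos x ^ (2 * l) *
        Real.exp (-(4 * a) * Real.sin x ^ 2)) := by
    refine intervalIntegral.hasSum_integral_of_dominated_convergence
      (fun n _ => |4 * a| ^ n / (n.factorial : ℝ)) ?_ ?_ ?_ ?_ ?_
    · intro n
      exact (by fun_prop : Continuous _).aestronglyMeasurable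
    · intro n
      refine Filter.Eventually.of_forall fun x _ => ?_
      have h1 := Real.abs_sin_le_one x
      have h2 := Real.abs_cos_le_one x
      have h3 : |Real.sin x| ^ (2 * p) * |Real.cos x| ^ (2 * l) ≤ 1 :=
        mul_le_one₀ (pow_le_one₀ (abs_nonneg _) h1) (by positivity)
          (pow_le_one₀ (abs_nonneg _) h2)
      have h4 : (|4 * a| * |Real.sin x| ^ 2) ^ n ≤ |4 * a| ^ n := by
        refine pow_le_pow_left₀ (by positivity) ?_ n
        exact mul_le_of_le_one_right (abs_nonneg _) (pow_le_one₀ (abs_nonneg _) h1)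
      rw [Real.norm_eq_abs, abs_mul, abs_mul, abs_div, abs_pow, abs_pow, abs_pow, abs_mul, abs_neg,
        abs_pow, Nat.abs_cast]
      calc _ ≤ 1 * (|4 * a| ^ n / (n.factorial : ℝ)) := by gcongr
        _ = _ := one_mul _
    · exact Filter.Eventually.of_forall fun x _ => Real.summable_pow_div_factorial _
    · simp
    · refine Filter.Eventually.of_forall fun x _ => ?_
      refine HasSum.mul_left _ ?_
      rw [Real.exp_eq_exp_ℝ]
      exact NormedSpace.expSeries_div_hasSum_exp _
  rw [← hs.tsum_eq, hyp1F1, ← tsum_mul_left]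
  congr 1
  funext n
  have h1 : ∀ x : ℝ, Real.sin x ^ (2 * p) * Real.cos x ^ (2 * l) *
        ((-(4 * a) * Real.sin x ^ 2) ^ n / (n.factorial : ℝ)) =
      ((-(4 * a)) ^ n / (n.factorial : ℝ)) *
        (Real.sin x ^ (2 * (p + n)) * Real.cos x ^ (2 * l)) := by
    intro x; rw [mul_pow, mul_add, pow_add _ (2 * p), pow_mul _ 2 n]; ring
  simp only [h1]
  rw [intervalIntegral.integral_const_mul, integral_sin_pow_mul_cos_pow, poch_add,
    show p + n + l = p + l + n by ring, ← poch_nat_succ (p + l) n, add_comm (1/2 : ℝ) p]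
  have hp : poch ((p + l + 1 : ℕ) : ℝ) n ≠ 0 := by
    intro h0
    have := poch_nat_succ (p + l) n
    rw [h0, zero_mul] at this
    exact (Nat.cast_ne_zero.2 (Nat.factorial_ne_zero _)) this.symm
  have hf := Nat.cast_ne_zero (R := ℝ).2 (Nat.factorial_ne_zero (p + l))
  have hn := Nat.cast_ne_zero (R := ℝ).2 (Nat.factorial_ne_zero n)
  field_simp

lemma integral_sin_cos_exp_odd (a : ℝ) (q r : ℕ) (hr : Odd r) :
    ∫ x in (0 : ℝ)..Real.pi, Real.sin x ^ q * Real.cos x ^ r *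
        Real.exp (-(4 * a) * Real.sin x ^ 2) = 0 := by
  have h := intervalIntegral.integral_comp_sub_left (a := 0) (b := Real.pi)
    (fun x => Real.sin x ^ q * Real.cos x ^ r * Real.exp (-(4 * a) * Real.sin x ^ 2)) Real.pi
  simp only [Real.sin_pi_sub, Real.cos_pi_sub, hr.neg_pow, sub_self, sub_zero, mul_neg, neg_mul,
    intervalIntegral.integral_neg] at h
  simp only [neg_mul]
  linarith

/-! ### The coefficients `A_{jk}` as integrals over one period -/

/-- The periodic factor `|e^{a(z-1)}|² (1-z)^J (1-z̄)^K`, `z = e^{is}`, occurring in the expansion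
of the integrand of `V²`. -/
noncomputable def periodicFactor (a : ℝ) (J K : ℕ) (s : ℝ) : ℂ :=
  (Real.exp (-a * (2 - 2 * Real.cos s)) : ℂ) *
    ((1 - Complex.exp (Complex.I * s)) ^ J * (1 - Complex.exp (-(Complex.I * s))) ^ K)

lemma continuous_periodicFactor (a : ℝ) (J K : ℕ) : Continuous (periodicFactor a J K) := by
  unfold periodicFactor
  fun_prop

lemma conj_exp_I_mul (s : ℝ) : (starRingEnd ℂ) (Complex.exp (Complex.I * s)) =
    Complex.exp (-(Complex.I * s)) := by
  rw [← Complex.exp_conj]; simp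

lemma norm_one_sub_exp_le (s : ℝ) : ‖1 - Complex.exp (Complex.I * s)‖ ≤ 2 := by
  refine (norm_sub_le _ _).trans ?_
  rw [mul_comm, Complex.norm_exp_ofReal_mul_I]; norm_num

lemma norm_periodicFactor_le {a : ℝ} (ha : 0 < a) (J K : ℕ) (s : ℝ) :
    ‖periodicFactor a J K s‖ ≤ 2 ^ (J + K) := by
  have h1 : ‖1 - Complex.exp (-(Complex.I * s))‖ ≤ 2 := by
    have := norm_one_sub_exp_le (-s)
    simpa using this
  rw [periodicFactor, norm_mul, norm_mul, norm_pow, norm_pow, Complex.norm_real,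
    Real.norm_of_nonneg (Real.exp_pos _).le, pow_add]
  have h0 : Real.exp (-a * (2 - 2 * Real.cos s)) ≤ 1 := by
    rw [Real.exp_le_one_iff]
    nlinarith [two_sub_two_cos_nonneg s]
  calc _ ≤ 1 * ((2 : ℝ) ^ J * 2 ^ K) := by
        gcongr
        exact norm_one_sub_exp_le s
    _ = _ := one_mul _

lemma periodic_periodicFactor (a : ℝ) (J K : ℕ) :
    Function.Periodic (periodicFactor a J K) (2 * Real.pi) := by
  intro s
  have h : Complex.exp (Complex.I * ((s + 2 * Real.pi : ℝ) : ℂ)) =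
      Complex.exp (Complex.I * s) := by
    have : Complex.I * ((s + 2 * Real.pi : ℝ) : ℂ) = Complex.I * s + 2 * Real.pi * Complex.I := by
      push_cast; ring
    rw [this, Complex.exp_periodic]
  simp only [periodicFactor, Real.cos_add_two_pi, Complex.exp_neg, h]

lemma periodicFactor_swap (a : ℝ) (J K : ℕ) (s : ℝ) :
    periodicFactor a J K s = (starRingEnd ℂ) (periodicFactor a K J s) := by
  have h : (starRingEnd ℂ) (Complex.exp (-(Complex.I * s))) = Complex.exp (Complex.I * s) := by
    rw [← conj_exp_I_mul, Complex.conj_conj]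
  simp only [periodicFactor, map_mul, map_pow, map_sub, map_one, h, conj_exp_I_mul,
    Complex.conj_ofReal]
  ring

/-- At `s = 2θ` the factor `(1-z)^J (1-z̄)^K` becomes `(2 sin θ)^{J+K} (sin θ - i cos θ)^{J-K}`. -/
lemma periodicFactor_two_mul (a : ℝ) (K m : ℕ) (x : ℝ) :
    periodicFactor a (K + m) K (2 * x) = (Real.exp (-(4 * a) * Real.sin x ^ 2) : ℂ) *
      (2 * Real.sin x) ^ (K + m + K) * (-Complex.I * Real.cos x + Real.sin x) ^ m := by
  have hsc : (Real.sin x : ℂ) ^ 2 + (Real.cos x : ℂ) ^ 2 = 1 := by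
    exact_mod_cast Real.sin_sq_add_cos_sq x
  have hE : Complex.exp (Complex.I * ((2 * x : ℝ) : ℂ)) =
      (Real.cos x + Real.sin x * Complex.I) ^ 2 := by
    rw [Complex.ofReal_cos, Complex.ofReal_sin, ← Complex.exp_mul_I, ← Complex.exp_nat_mul]
    congr 1; push_cast; ring
  have hE' : Complex.exp (-(Complex.I * ((2 * x : ℝ) : ℂ))) =
      (Real.cos x - Real.sin x * Complex.I) ^ 2 := by
    rw [← conj_exp_I_mul, hE]
    simp only [map_pow, map_add, map_mul, Complex.conj_ofReal, Complex.conj_I]; ring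
  have h1 : 1 - (Real.cos x + Real.sin x * Complex.I) ^ 2 =
      (2 * Real.sin x : ℂ) * (-Complex.I * Real.cos x + Real.sin x) := by
    linear_combination -hsc - (Real.sin x : ℂ) ^ 2 * Complex.I_sq
  have h2 : 1 - (Real.cos x - Real.sin x * Complex.I) ^ 2 =
      (2 * Real.sin x : ℂ) * (Complex.I * Real.cos x + Real.sin x) := by
    linear_combination -hsc - (Real.sin x : ℂ) ^ 2 * Complex.I_sq
  have h3 : (-Complex.I * Real.cos x + Real.sin x : ℂ) * (Complex.I * Real.cos x + Real.sin x) =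
      1 := by
    linear_combination hsc - (Real.cos x : ℂ) ^ 2 * Complex.I_sq
  have h4 : -a * (2 - 2 * Real.cos (2 * x)) = -(4 * a) * Real.sin x ^ 2 := by
    rw [Real.cos_two_mul, Real.sin_sq]; ring
  rw [periodicFactor, hE, hE', h1, h2, h4]
  calc _ = (Real.exp (-(4 * a) * Real.sin x ^ 2) : ℂ) * (2 * Real.sin x) ^ (K + m + K) *
        (-Complex.I * Real.cos x + Real.sin x) ^ m *
        ((-Complex.I * Real.cos x + Real.sin x : ℂ) * (Complex.I * Real.cos x + Real.sin x)) ^ K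
        := by simp only [mul_pow, pow_add]; ring
    _ = _ := by rw [h3, one_pow, mul_one]

/-- The case `J = K + m ≥ K`: substitute `s = 2θ`, expand `(sin θ - i cos θ)^m` binomially, and
evaluate each surviving term by `integral_sin_cos_exp`. -/
lemma integral_periodicFactor_of_le (a : ℝ) (K m : ℕ) :
    ∫ s in (0 : ℝ)..2 * Real.pi, periodicFactor a (K + m) K s =
      ((Real.pi * 2 ^ (K + m + K + 1) * poisA₀ a (K + m + 1) (K + 1) : ℝ) : ℂ) := by
  have hscale : ∫ s in (0 : ℝ)..2 * Real.pi, periodicFactor a (K + m) K s =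
      2 * ∫ x in (0 : ℝ)..Real.pi, periodicFactor a (K + m) K (2 * x) := by
    have := intervalIntegral.smul_integral_comp_mul_left (a := 0) (b := Real.pi)
      (periodicFactor a (K + m) K) 2
    rw [mul_zero] at this
    rw [← this, Complex.real_smul]; simp
  set R : ℕ → ℝ := fun r => ∫ x in (0 : ℝ)..Real.pi,
    Real.sin x ^ (K + m + K + (m - r)) * Real.cos x ^ r *
      Real.exp (-(4 * a) * Real.sin x ^ 2) with hR
  have hexpand : ∀ x : ℝ, periodicFactor a (K + m) K (2 * x) = ∑ r ∈ Finset.range (m + 1),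
      ((2 : ℂ) ^ (K + m + K) * (-Complex.I) ^ r * (m.choose r : ℂ)) *
        ((Real.sin x ^ (K + m + K + (m - r)) * Real.cos x ^ r *
          Real.exp (-(4 * a) * Real.sin x ^ 2) : ℝ) : ℂ) := by
    intro x
    rw [periodicFactor_two_mul, add_pow, Finset.mul_sum]
    refine Finset.sum_congr rfl fun r _ => ?_
    push_cast
    rw [mul_pow, mul_pow, pow_add _ (K + m + K) (m - r)]; ring
  have h2 : ∫ x in (0 : ℝ)..Real.pi, periodicFactor a (K + m) K (2 * x) =
      ∑ r ∈ Finset.range (m + 1),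
        ((2 : ℂ) ^ (K + m + K) * (-Complex.I) ^ r * (m.choose r : ℂ)) * (R r : ℂ) := by
    simp only [hexpand]
    rw [intervalIntegral.integral_finsetSum
      (fun r _ => Continuous.intervalIntegrable (by fun_prop) _ _)]
    refine Finset.sum_congr rfl fun r _ => ?_
    rw [intervalIntegral.integral_const_mul, intervalIntegral.integral_ofReal]
  -- odd powers of the cosine integrate to zero, so only `r = 2 l` survives
  have h3 : ∑ r ∈ Finset.range (m + 1),
        ((2 : ℂ) ^ (K + m + K) * (-Complex.I) ^ r * (m.choose r : ℂ)) * (R r : ℂ) =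
      ∑ l ∈ Finset.range (m / 2 + 1),
        ((2 : ℂ) ^ (K + m + K) * (-1) ^ l * (m.choose (2 * l) : ℂ)) * (R (2 * l) : ℂ) := by
    symm
    refine Finset.sum_of_injOn (fun l => 2 * l) (fun x _ y _ h => by simpa using h) ?_ ?_ ?_
    · intro l hl
      simp only [Finset.coe_range, Set.mem_Iio] at hl ⊢
      omega
    · intro r hr hr'
      have hodd : Odd r := by
        rw [← Nat.not_even_iff_odd]
        rintro ⟨l, hl⟩
        refine hr' ⟨l, ?_, by simp only; omega⟩
        simp only [Finset.coe_range, Set.mem_Iio, Finset.mem_range] at hr ⊢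
        omega
      have : R r = 0 := integral_sin_cos_exp_odd a _ r hodd
      rw [this]; simp
    · intro l _
      rw [pow_mul (-Complex.I) 2 l]; simp
  have h4 : ∀ l ∈ Finset.range (m / 2 + 1), R (2 * l) =
      Real.pi * poch (1/2) (K + m - l) * poch (1/2) l / ((K + m).factorial : ℝ) *
        hyp1F1 (((K + m + 1 : ℕ) : ℝ) - l - 1/2) ((K + m + 1 : ℕ) : ℝ) (-(4 * a)) := by
    intro l hl
    have hl' : 2 * l ≤ m := by
      have := Finset.mem_range.1 hl
      omega
    have e1 : K + m + K + (m - 2 * l) = 2 * (K + m - l) := by omega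
    have e2 : K + m - l + l = K + m := by omega
    have e3 : ((K + m - l : ℕ) : ℝ) + 1/2 = ((K + m + 1 : ℕ) : ℝ) - l - 1/2 := by
      rw [Nat.cast_sub (by omega)]; push_cast; ring
    simp only [hR]
    rw [e1, integral_sin_cos_exp, e2, e3]
  rw [hscale, h2, h3, poisA₀]
  have e5 : K + m + 1 - (K + 1) = m := by omega
  rw [e5, Nat.add_sub_cancel]
  push_cast
  rw [Finset.mul_sum, Finset.mul_sum, Finset.mul_sum]
  refine Finset.sum_congr rfl fun l hl => ?_
  have e6 : K + m + 1 - l - 1 = K + m - l := by omega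
  rw [h4 l hl, e6]
  push_cast
  have := pow_succ (2 : ℂ) (K + m + K)
  rw [this]
  ring

/-- Identification of the coefficient `A_{J+1,K+1}` with an integral over one
period. The case `J < K` follows by complex conjugation, the value being real. -/
lemma integral_periodicFactor (a : ℝ) (J K : ℕ) :
    ∫ s in (0 : ℝ)..2 * Real.pi, periodicFactor a J K s =
      ((Real.pi * 2 ^ (J + K + 1) * poisA a (J + 1) (K + 1) : ℝ) : ℂ) := by
  rcases le_or_gt K J with h | h
  · obtain ⟨m, rfl⟩ := Nat.exists_eq_add_of_le h
    rw [integral_periodicFactor_of_le, poisA, if_pos (by omega)]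
  · obtain ⟨m, rfl⟩ := Nat.exists_eq_add_of_le h.le
    simp only [periodicFactor_swap a J (J + m)]
    rw [intervalIntegral.intervalIntegral_conj, integral_periodicFactor_of_le, poisA,
      if_neg (by omega), Complex.conj_ofReal, add_comm J (J + m)]

/-- `A_{jk}` is, up to normalization, the mean over a period of a function bounded by
`2^{j+k-2}`. -/
lemma poisA_sq_le_one {a : ℝ} (ha : 0 < a) (J K : ℕ) : poisA a (J + 1) (K + 1) ^ 2 ≤ 1 := by
  have h := intervalIntegral.norm_integral_le_of_norm_le_const (a := 0) (b := 2 * Real.pi)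
    (f := periodicFactor a J K) (C := 2 ^ (J + K)) (fun s _ => norm_periodicFactor_le ha J K s)
  have hpi := Real.pi_pos
  rw [integral_periodicFactor, Complex.norm_real, Real.norm_eq_abs, abs_mul, sub_zero,
    abs_of_pos (by positivity : (0 : ℝ) < 2 * Real.pi),
    abs_of_pos (by positivity : (0 : ℝ) < Real.pi * 2 ^ (J + K + 1)), pow_succ] at h
  have hp : (0 : ℝ) < Real.pi * (2 ^ (J + K) * 2) := by positivity
  have : |poisA a (J + 1) (K + 1)| ≤ 1 := by
    refine le_of_mul_le_mul_left ?_ hp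
    linarith
  exact (sq_le_one_iff_abs_le_one _).2 this

/-! ### Charlier generating functions and the joint characteristic function -/

lemma poissonDensity_nonneg {a : ℝ} (ha : 0 < a) (x : ℕ) : 0 ≤ poissonDensity a x := by
  unfold poissonDensity; positivity

/-- Poisson generating function weighted by the normalized falling factorial
`x(x-1)⋯(x-k+1) / a^k`. -/
lemma hasSum_poisson_choose {a : ℝ} (ha : 0 < a) (k : ℕ) (z : ℂ) :
    HasSum (fun x : ℕ => z ^ x *
      ((poissonDensity a x * (x.choose k * k.factorial / a ^ k) : ℝ) : ℂ))
      (z ^ k * Complex.exp (a * (z - 1))) := by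
  have hinj : Function.Injective (fun y : ℕ => y + k) := add_left_injective k
  rw [← hinj.hasSum_iff]
  · have h := (NormedSpace.expSeries_div_hasSum_exp (a * z)).mul_left (z ^ k * Complex.exp (-a))
    rw [← Complex.exp_eq_exp_ℂ, mul_assoc, ← Complex.exp_add,
      show -(a : ℂ) + a * z = a * (z - 1) by ring] at h
    convert! h using 1
    funext y
    have hc : ((y + k).choose k : ℂ) * y.factorial * k.factorial = (y + k).factorial := by
      exact_mod_cast Nat.add_choose_mul_factorial_mul_factorial y k
    have hy : (y.factorial : ℂ) ≠ 0 := Nat.cast_ne_zero.2 y.factorial_ne_zero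
    have hk : (k.factorial : ℂ) ≠ 0 := Nat.cast_ne_zero.2 k.factorial_ne_zero
    have hyk : ((y + k).factorial : ℂ) ≠ 0 := Nat.cast_ne_zero.2 (y + k).factorial_ne_zero
    have ha' : (a : ℂ) ≠ 0 := by exact_mod_cast ha.ne'
    simp only [Function.comp, poissonDensity]
    push_cast
    rw [← hc] at hyk ⊢
    have hch : ((y + k).choose k : ℂ) ≠ 0 := by
      intro h0; rw [h0] at hyk; simp at hyk
    rw [pow_add, pow_add, mul_pow]
    field_simp
  · intro x hx
    have : x < k := by
      by_contra hlt
      exact hx ⟨x - k, by simp only; omega⟩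
    rw [Nat.choose_eq_zero_of_lt this]; simp

/-- Generating function of a Charlier polynomial against the Poisson density. -/
lemma hasSum_poisson_charlier {a : ℝ} (ha : 0 < a) (n : ℕ) (z : ℂ) :
    HasSum (fun x : ℕ => z ^ x * ((poissonDensity a x * charlier a n x : ℝ) : ℂ))
      ((Real.sqrt (a ^ n / n.factorial) : ℂ) * (1 - z) ^ n * Complex.exp (a * (z - 1))) := by
  have h := (hasSum_sum (s := Finset.range (n + 1)) fun k _ =>
    (hasSum_poisson_choose ha k z).mul_left ((-1 : ℂ) ^ k * n.choose k)).mul_left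
      (Real.sqrt (a ^ n / n.factorial) : ℂ)
  have e : (1 - z) ^ n = ∑ k ∈ Finset.range (n + 1), (-1 : ℂ) ^ k * n.choose k * z ^ k := by
    rw [sub_eq_neg_add, add_pow]
    refine Finset.sum_congr rfl fun k _ => ?_
    rw [one_pow, neg_pow]; ring
  convert! h using 1
  · funext x
    rw [charlier]
    push_cast
    rw [Finset.mul_sum, Finset.mul_sum, Finset.mul_sum, Finset.mul_sum]
    refine Finset.sum_congr rfl fun k _ => ?_
    ring
  · rw [e, mul_assoc, Finset.sum_mul]
    congr 1
    refine Finset.sum_congr rfl fun k _ => ?_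
    ring

/-- The crude `L¹` bound `E|C_n(X)| ≤ (4ⁿ aⁿ/n!)^{1/2}`, obtained by dropping the signs in `C_n`;
summing the squares over `n` still converges when `λ = 1`, which justifies the exchange of sums in
`jointCFNat_bivariate_poisson`. -/
lemma summable_poisson_abs_charlier {a : ℝ} (ha : 0 < a) (n : ℕ) :
    Summable (fun x : ℕ => poissonDensity a x * |charlier a n x|) ∧
      ∑' x : ℕ, poissonDensity a x * |charlier a n x| ≤
        Real.sqrt (a ^ n / n.factorial) * 2 ^ n := by
  have h0 : ∀ k, HasSum (fun x : ℕ => poissonDensity a x * (x.choose k * k.factorial / a ^ k))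
      1 := by
    intro k
    have := hasSum_poisson_choose ha k 1
    simp only [one_pow, one_mul, sub_self, mul_zero, Complex.exp_zero] at this
    exact Complex.hasSum_ofReal.1 (by simpa only [Complex.ofReal_one] using this)
  have h := (hasSum_sum (s := Finset.range (n + 1)) fun k _ =>
    (h0 k).mul_left ((n.choose k : ℕ) : ℝ)).mul_left (Real.sqrt (a ^ n / n.factorial))
  have e : ∑ k ∈ Finset.range (n + 1), ((n.choose k : ℕ) : ℝ) * 1 = 2 ^ n := by
    simp only [mul_one]
    exact_mod_cast Nat.sum_range_choose n
  rw [e] at h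
  have hle : ∀ x : ℕ, poissonDensity a x * |charlier a n x| ≤ Real.sqrt (a ^ n / n.factorial) *
      ∑ k ∈ Finset.range (n + 1), (n.choose k : ℝ) *
        (poissonDensity a x * (x.choose k * k.factorial / a ^ k)) := by
    intro x
    rw [charlier, abs_mul, abs_of_nonneg (Real.sqrt_nonneg _), mul_left_comm]
    refine mul_le_mul_of_nonneg_left ?_ (Real.sqrt_nonneg _)
    have : ∑ k ∈ Finset.range (n + 1), (n.choose k : ℝ) *
        (poissonDensity a x * (x.choose k * k.factorial / a ^ k)) = poissonDensity a x *
        ∑ k ∈ Finset.range (n + 1), (n.choose k : ℝ) * x.choose k * k.factorial / a ^ k := by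
      rw [Finset.mul_sum]
      refine Finset.sum_congr rfl fun k _ => ?_
      ring
    rw [this]
    refine mul_le_mul_of_nonneg_left ?_ (poissonDensity_nonneg ha x)
    refine (Finset.abs_sum_le_sum_abs _ _).trans (Finset.sum_le_sum fun k _ => le_of_eq ?_)
    rw [abs_div, abs_mul, abs_mul, abs_mul, abs_pow, abs_pow, abs_neg, abs_one, one_pow, one_mul,
      abs_of_pos ha, Nat.abs_cast, Nat.abs_cast, Nat.abs_cast]
  have hs : Summable (fun x : ℕ => poissonDensity a x * |charlier a n x|) :=
    Summable.of_nonneg_of_le (fun x => mul_nonneg (poissonDensity_nonneg ha x) (abs_nonneg _))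
      hle h.summable
  exact ⟨hs, (hs.tsum_le_tsum hle h.summable).trans_eq h.tsum_eq⟩

lemma hasSum_mul_prod {u v : ℕ → ℂ} {A B : ℂ} (hu : HasSum u A) (hv : HasSum v B)
    (hu' : Summable fun x => ‖u x‖) (hv' : Summable fun x => ‖v x‖) :
    HasSum (fun p : ℕ × ℕ => u p.1 * v p.2) (A * B) :=
  hu.mul hv (summable_mul_of_summable_norm hu' hv')

/-- Closed form of the joint characteristic function of the bivariate Poisson distribution. -/
lemma jointCFNat_bivariate_poisson {a lam : ℝ} (ha : 0 < a) (hlam : lam ∈ Set.Icc (0 : ℝ) 1)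
    {φ : ℕ → ℕ → ℝ}
    (hexp : ∀ x y : ℕ, φ x y = poissonDensity a x * poissonDensity a y *
      ∑' n : ℕ, lam ^ n * charlier a n x * charlier a n y) (s t : ℝ) :
    jointCFNat φ s t = Complex.exp (a * (Complex.exp (Complex.I * s) - 1)) *
      Complex.exp (a * (Complex.exp (Complex.I * t) - 1)) *
      Complex.exp (lam * a * ((1 - Complex.exp (Complex.I * s)) *
        (1 - Complex.exp (Complex.I * t)))) := by
  set z := Complex.exp (Complex.I * s) with hz
  set w := Complex.exp (Complex.I * t) with hw
  have hzn : ‖z‖ = 1 := by rw [hz, mul_comm, Complex.norm_exp_ofReal_mul_I]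
  have hwn : ‖w‖ = 1 := by rw [hw, mul_comm, Complex.norm_exp_ofReal_mul_I]
  set f : ℕ → ℕ × ℕ → ℂ := fun n xy => (lam : ℂ) ^ n *
    ((z ^ xy.1 * ((poissonDensity a xy.1 * charlier a n xy.1 : ℝ) : ℂ)) *
      (w ^ xy.2 * ((poissonDensity a xy.2 * charlier a n xy.2 : ℝ) : ℂ))) with hf
  have hfn : ∀ n xy, ‖f n xy‖ = lam ^ n * ((poissonDensity a xy.1 * |charlier a n xy.1|) *
      (poissonDensity a xy.2 * |charlier a n xy.2|)) := by
    intro n xy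
    simp only [hf]
    rw [norm_mul, norm_mul, norm_mul, norm_mul, norm_pow, norm_pow, norm_pow, hzn, hwn,
      Complex.norm_real, Complex.norm_real, Complex.norm_real, Real.norm_of_nonneg hlam.1,
      norm_mul, norm_mul, Real.norm_of_nonneg (poissonDensity_nonneg ha _),
      Real.norm_of_nonneg (poissonDensity_nonneg ha _), Real.norm_eq_abs, Real.norm_eq_abs]
    simp
  have hin : ∀ n, HasSum (fun xy => ‖f n xy‖)
      (lam ^ n * ((∑' x : ℕ, poissonDensity a x * |charlier a n x|) *
        (∑' x : ℕ, poissonDensity a x * |charlier a n x|))) := by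
    intro n
    have hs := (summable_poisson_abs_charlier ha n).1
    have hnn : 0 ≤ fun x : ℕ => poissonDensity a x * |charlier a n x| :=
      fun x => mul_nonneg (poissonDensity_nonneg ha x) (abs_nonneg _)
    simp only [hfn]
    exact (hs.hasSum.mul hs.hasSum (hs.mul_of_nonneg hs hnn hnn)).mul_left _
  have hsum : Summable (Function.uncurry f) := by
    refine Summable.of_norm ?_
    rw [summable_prod_of_nonneg (fun _ => norm_nonneg _)]
    refine ⟨fun n => (hin n).summable, ?_⟩
    simp only [Function.uncurry, (hin _).tsum_eq]
    refine Summable.of_nonneg_of_le (fun n => ?_) (fun n => ?_)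
      (Real.summable_pow_div_factorial (4 * a))
    · exact mul_nonneg (pow_nonneg hlam.1 n) (mul_self_nonneg _)
    · have h1 := (summable_poisson_abs_charlier ha n).2
      have h2 : 0 ≤ ∑' x : ℕ, poissonDensity a x * |charlier a n x| :=
        tsum_nonneg fun x => mul_nonneg (poissonDensity_nonneg ha x) (abs_nonneg _)
      calc _ ≤ 1 * ((Real.sqrt (a ^ n / n.factorial) * 2 ^ n) *
            (Real.sqrt (a ^ n / n.factorial) * 2 ^ n)) := by
            gcongr
            exact pow_le_one₀ hlam.1 hlam.2
        _ = (Real.sqrt (a ^ n / n.factorial)) ^ 2 * (2 ^ n * 2 ^ n) := by ring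
        _ = _ := by
            rw [Real.sq_sqrt (by positivity), ← mul_pow 2 2, mul_pow 4 a]; norm_num; ring
  have h1 : jointCFNat φ s t = ∑' xy : ℕ × ℕ, ∑' n : ℕ, f n xy := by
    rw [jointCFNat]
    congr 1
    funext xy
    have e1 : Complex.exp (Complex.I * (s * xy.1 + t * xy.2)) = z ^ xy.1 * w ^ xy.2 := by
      rw [hz, hw, ← Complex.exp_nat_mul, ← Complex.exp_nat_mul, ← Complex.exp_add]
      congr 1; ring
    rw [e1, hexp, ← tsum_mul_left, Complex.ofReal_tsum, ← tsum_mul_left]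
    congr 1
    funext n
    simp only [hf]
    push_cast
    ring
  rw [h1, hsum.tsum_comm]
  have h2 : ∀ n, ∑' xy, f n xy = (Complex.exp (a * (z - 1)) * Complex.exp (a * (w - 1))) *
      ((lam * a * ((1 - z) * (1 - w))) ^ n / (n.factorial : ℂ)) := by
    intro n
    have hA := hasSum_poisson_charlier ha n z
    have hB := hasSum_poisson_charlier ha n w
    have habs : ∀ u : ℂ, ‖u‖ = 1 → Summable fun x : ℕ =>
        ‖u ^ x * ((poissonDensity a x * charlier a n x : ℝ) : ℂ)‖ := by
      intro u hu
      refine (summable_poisson_abs_charlier ha n).1.congr fun x => ?_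
      rw [norm_mul, norm_pow, hu, one_pow, one_mul, Complex.norm_real, norm_mul,
        Real.norm_of_nonneg (poissonDensity_nonneg ha _), Real.norm_eq_abs]
    have hAB := (hasSum_mul_prod hA hB (habs z hzn) (habs w hwn)).mul_left ((lam : ℂ) ^ n)
    have hsq : (Real.sqrt (a ^ n / n.factorial) : ℂ) ^ 2 = (a : ℂ) ^ n / n.factorial := by
      rw [← Complex.ofReal_pow, Real.sq_sqrt (by positivity)]; push_cast; rfl
    rw [hAB.tsum_eq, mul_pow, mul_pow, mul_pow]
    calc _ = (lam : ℂ) ^ n * (Real.sqrt (a ^ n / n.factorial) : ℂ) ^ 2 *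
          ((1 - z) ^ n * (1 - w) ^ n) *
          (Complex.exp (a * (z - 1)) * Complex.exp (a * (w - 1))) := by ring
      _ = _ := by rw [hsq]; ring
  simp only [h2]
  rw [tsum_mul_left, Complex.exp_eq_exp_ℂ, (NormedSpace.expSeries_div_hasSum_exp _).tsum_eq]

/-! ### Expansion and termwise integration of the integrand -/

/-- The coefficients of `e^{bζ} - 1`, indexed from the linear term. -/
noncomputable def expCoeff (b : ℝ) (j : ℕ) : ℝ := b ^ (j + 1) / ((j + 1).factorial : ℝ)

lemma expCoeff_nonneg {b : ℝ} (hb : 0 ≤ b) (j : ℕ) : 0 ≤ expCoeff b j := by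
  unfold expCoeff; positivity

lemma hasSum_expCoeff (b : ℝ) (ζ : ℂ) :
    HasSum (fun j : ℕ => (expCoeff b j : ℂ) * ζ ^ (j + 1)) (Complex.exp (b * ζ) - 1) := by
  have h := NormedSpace.expSeries_div_hasSum_exp ((b : ℂ) * ζ)
  rw [← Complex.exp_eq_exp_ℂ, ← hasSum_nat_add_iff' 1] at h
  simp only [Finset.range_one, Finset.sum_singleton, pow_zero, Nat.factorial_zero, Nat.cast_one,
    div_one] at h
  convert! h using 1
  funext j
  simp only [expCoeff, mul_pow]
  push_cast
  ring

lemma hasSum_expCoeff_mul_pow (b r : ℝ) :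
    HasSum (fun j : ℕ => expCoeff b j * r ^ (j + 1)) (Real.exp (b * r) - 1) := by
  rw [← Complex.hasSum_ofReal]
  push_cast
  exact hasSum_expCoeff b r

/-- One variable of the general term in the expansion of the integrand of `V²`. -/
noncomputable def foldedTerm (a : ℝ) (J K : ℕ) (s : ℝ) : ℂ :=
  periodicFactor a J K s * (((2 - 2 * Real.cos s) / s ^ 2 : ℝ) : ℂ)

lemma integrable_foldedTerm {a : ℝ} (ha : 0 < a) (J K : ℕ) : Integrable (foldedTerm a J K) :=
  integrable_kernel_mul (continuous_periodicFactor a J K) (norm_periodicFactor_le ha J K)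

lemma integral_foldedTerm {a : ℝ} (ha : 0 < a) (J K : ℕ) :
    ∫ s, foldedTerm a J K s =
      ((Real.pi * 2 ^ (J + K + 1) * poisA a (J + 1) (K + 1) : ℝ) : ℂ) := by
  rw [← integral_periodicFactor]
  exact integral_kernel_mul (continuous_periodicFactor a J K) (norm_periodicFactor_le ha J K)
    (periodic_periodicFactor a J K)

lemma integrable_kernel : Integrable (fun s : ℝ => (2 - 2 * Real.cos s) / s ^ 2) := by
  have h := (integrable_kernel_mul (g := fun _ => (1 : ℂ)) continuous_const (C := 1) (by simp)).re
  refine h.congr (Filter.Eventually.of_forall fun s => ?_)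
  simp only [one_mul]
  exact Complex.ofReal_re _

lemma integral_norm_foldedTerm_le {a : ℝ} (ha : 0 < a) (J K : ℕ) :
    ∫ s, ‖foldedTerm a J K s‖ ≤ 2 ^ (J + K) * ∫ s : ℝ, (2 - 2 * Real.cos s) / s ^ 2 := by
  rw [← integral_const_mul]
  refine integral_mono (integrable_foldedTerm ha J K).norm (integrable_kernel.const_mul _)
    fun s => ?_
  have h0 : 0 ≤ (2 - 2 * Real.cos s) / s ^ 2 :=
    div_nonneg (two_sub_two_cos_nonneg s) (sq_nonneg s)
  simp only [foldedTerm]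
  rw [norm_mul, Complex.norm_real, Real.norm_of_nonneg h0]
  exact mul_le_mul_of_nonneg_right (norm_periodicFactor_le ha J K s) h0

lemma exp_I_mul_mul_conj (s : ℝ) :
    Complex.exp (Complex.I * s) * Complex.exp (-(Complex.I * s)) = 1 := by
  rw [← Complex.exp_add, add_neg_cancel, Complex.exp_zero]

lemma exp_I_mul_add_conj (s : ℝ) :
    Complex.exp (Complex.I * s) + Complex.exp (-(Complex.I * s)) = 2 * (Real.cos s : ℂ) := by
  rw [Complex.ofReal_cos, Complex.two_cos, mul_comm Complex.I, neg_mul]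

lemma foldedTerm_eq (a : ℝ) (J K : ℕ) (s : ℝ) :
    foldedTerm a J K s = (Complex.exp (a * (Complex.exp (Complex.I * s) - 1)) *
      (starRingEnd ℂ) (Complex.exp (a * (Complex.exp (Complex.I * s) - 1)))) *
      ((1 - Complex.exp (Complex.I * s)) ^ (J + 1) *
        (starRingEnd ℂ) (1 - Complex.exp (Complex.I * s)) ^ (K + 1)) / (s : ℂ) ^ 2 := by
  have h1 := exp_I_mul_mul_conj s
  have h2 := exp_I_mul_add_conj s
  have h3 : (1 - Complex.exp (Complex.I * s)) * (1 - Complex.exp (-(Complex.I * s))) =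
      ((2 - 2 * Real.cos s : ℝ) : ℂ) := by
    push_cast
    rw [← Complex.ofReal_cos]
    linear_combination h1 - h2
  have h4 : Complex.exp (a * (Complex.exp (Complex.I * s) - 1)) *
      (starRingEnd ℂ) (Complex.exp (a * (Complex.exp (Complex.I * s) - 1))) =
      (Real.exp (-a * (2 - 2 * Real.cos s)) : ℂ) := by
    rw [← Complex.exp_conj, ← Complex.exp_add, Complex.ofReal_exp]
    congr 1
    simp only [map_mul, map_sub, map_one, Complex.conj_ofReal, conj_exp_I_mul]
    push_cast
    rw [← Complex.ofReal_cos]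
    linear_combination (a : ℂ) * h2
  rw [h4, foldedTerm, periodicFactor, Complex.ofReal_div, ← h3]
  simp only [map_sub, map_one, conj_exp_I_mul]
  push_cast
  ring

/-- Expansion of the integrand of `V²` into products of functions of one variable. -/
lemma hasSum_integrand (a lam : ℝ) (s t : ℝ) (Δ : ℂ)
    (hΔ : Δ = Complex.exp (a * (Complex.exp (Complex.I * s) - 1)) *
      Complex.exp (a * (Complex.exp (Complex.I * t) - 1)) *
      (Complex.exp (lam * a * ((1 - Complex.exp (Complex.I * s)) *
        (1 - Complex.exp (Complex.I * t)))) - 1)) :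
    HasSum (fun jk : ℕ × ℕ => ((expCoeff (lam * a) jk.1 * expCoeff (lam * a) jk.2 : ℝ) : ℂ) *
      (foldedTerm a jk.1 jk.2 s * foldedTerm a jk.1 jk.2 t))
      ((‖Δ‖ ^ 2 / (s ^ 2 * t ^ 2) : ℝ) : ℂ) := by
  set u := 1 - Complex.exp (Complex.I * s) with hu
  set v := 1 - Complex.exp (Complex.I * t) with hv
  set E := Complex.exp (a * (Complex.exp (Complex.I * s) - 1)) with hE
  set E' := Complex.exp (a * (Complex.exp (Complex.I * t) - 1)) with hE'
  have h1 := hasSum_expCoeff (lam * a) (u * v)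
  have h2 := hasSum_expCoeff (lam * a) ((starRingEnd ℂ) (u * v))
  have hn : ∀ ζ : ℂ, Summable fun j : ℕ => ‖(expCoeff (lam * a) j : ℂ) * ζ ^ (j + 1)‖ := by
    intro ζ
    refine (hasSum_expCoeff_mul_pow |lam * a| ‖ζ‖).summable.congr fun j => ?_
    rw [norm_mul, Complex.norm_real, norm_pow, expCoeff, expCoeff, norm_div, norm_pow,
      Real.norm_eq_abs, Real.norm_of_nonneg (Nat.cast_nonneg _)]
  have h3 := (hasSum_mul_prod h1 h2 (hn _) (hn _)).mul_left
    (E * (starRingEnd ℂ) E * (E' * (starRingEnd ℂ) E') / ((s : ℂ) ^ 2 * (t : ℂ) ^ 2))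
  have h4 : (Complex.exp (((lam * a : ℝ) : ℂ) * (starRingEnd ℂ) (u * v)) - 1) =
      (starRingEnd ℂ) (Complex.exp (((lam * a : ℝ) : ℂ) * (u * v)) - 1) := by
    rw [map_sub, map_one, ← Complex.exp_conj,
      map_mul (starRingEnd ℂ) ((lam * a : ℝ) : ℂ), Complex.conj_ofReal]
  have h5 : ((‖Δ‖ ^ 2 / (s ^ 2 * t ^ 2) : ℝ) : ℂ) =
      E * (starRingEnd ℂ) E * (E' * (starRingEnd ℂ) E') / ((s : ℂ) ^ 2 * (t : ℂ) ^ 2) *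
      ((Complex.exp (((lam * a : ℝ) : ℂ) * (u * v)) - 1) *
        (Complex.exp (((lam * a : ℝ) : ℂ) * (starRingEnd ℂ) (u * v)) - 1)) := by
    rw [h4]
    push_cast
    rw [← Complex.mul_conj', hΔ, map_mul, map_mul]
    ring
  rw [h5]
  convert! h3 using 1
  funext jk
  rw [foldedTerm_eq, foldedTerm_eq, ← hu, ← hv, ← hE, ← hE', map_mul]
  push_cast
  ring

/-- Termwise integration of the expansion of the integrand. -/
lemma hasSum_dcovNat {a lam : ℝ} (ha : 0 < a) (hlam : lam ∈ Set.Icc (0 : ℝ) 1)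
    {φ : ℕ → ℕ → ℝ}
    (hexp : ∀ x y : ℕ, φ x y = poissonDensity a x * poissonDensity a y *
      ∑' n : ℕ, lam ^ n * charlier a n x * charlier a n y) :
    HasSum (fun jk : ℕ × ℕ => expCoeff (lam * a) jk.1 * expCoeff (lam * a) jk.2 *
      (2 ^ (jk.1 + jk.2 + 1) * poisA a (jk.1 + 1) (jk.2 + 1)) ^ 2) (dcovNat φ) := by
  have hb : 0 ≤ lam * a := mul_nonneg hlam.1 ha.le
  set c : ℕ × ℕ → ℝ := fun jk => expCoeff (lam * a) jk.1 * expCoeff (lam * a) jk.2 with hc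
  have hc0 : ∀ jk, 0 ≤ c jk := fun jk => mul_nonneg (expCoeff_nonneg hb _) (expCoeff_nonneg hb _)
  set F : ℕ × ℕ → ℝ × ℝ → ℂ := fun jk w =>
    (c jk : ℂ) * (foldedTerm a jk.1 jk.2 w.1 * foldedTerm a jk.1 jk.2 w.2) with hF
  have hFint : ∀ jk, Integrable (F jk) := fun jk =>
    ((integrable_foldedTerm ha jk.1 jk.2).mul_prod (integrable_foldedTerm ha jk.1 jk.2)).const_mul _
  set M := ∫ s : ℝ, (2 - 2 * Real.cos s) / s ^ 2 with hM
  have hFnorm : ∀ jk, ∫ w, ‖F jk w‖ = c jk * ((∫ s, ‖foldedTerm a jk.1 jk.2 s‖) *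
      ∫ s, ‖foldedTerm a jk.1 jk.2 s‖) := by
    intro jk
    rw [← integral_prod_mul, ← Measure.volume_eq_prod, ← integral_const_mul]
    congr 1
    funext w
    simp only [hF]
    rw [norm_mul, norm_mul, Complex.norm_real, Real.norm_of_nonneg (hc0 jk)]
  have hsum : Summable fun jk => ∫ w, ‖F jk w‖ := by
    have hs := (hasSum_expCoeff_mul_pow (lam * a) 4).summable
    have hnn : 0 ≤ fun j => expCoeff (lam * a) j * (4 : ℝ) ^ (j + 1) :=
      fun j => mul_nonneg (expCoeff_nonneg hb j) (by positivity)
    refine Summable.of_nonneg_of_le (fun jk => integral_nonneg fun w => norm_nonneg _)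
      (fun jk => ?_) ((hs.mul_of_nonneg hs hnn hnn).mul_left (M ^ 2 / 16))
    rw [hFnorm]
    have h1 := integral_norm_foldedTerm_le ha jk.1 jk.2
    have h0 : 0 ≤ ∫ s, ‖foldedTerm a jk.1 jk.2 s‖ := integral_nonneg fun s => norm_nonneg _
    calc _ ≤ c jk * ((2 ^ (jk.1 + jk.2) * M) * (2 ^ (jk.1 + jk.2) * M)) :=
          mul_le_mul_of_nonneg_left (mul_self_le_mul_self h0 h1) (hc0 jk)
      _ = c jk * M ^ 2 * (2 ^ (jk.1 + jk.2) * 2 ^ (jk.1 + jk.2)) := by ring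
      _ = _ := by rw [← mul_pow]; simp only [hc]; norm_num; ring_nf
  have h := hasSum_integral_of_summable_integral_norm hFint hsum
  have hval : ∀ jk, ∫ w, F jk w = ((Real.pi ^ 2 * (c jk *
      (2 ^ (jk.1 + jk.2 + 1) * poisA a (jk.1 + 1) (jk.2 + 1)) ^ 2) : ℝ) : ℂ) := by
    intro jk
    simp only [hF]
    rw [integral_const_mul, Measure.volume_eq_prod, integral_prod_mul, integral_foldedTerm ha]
    push_cast
    ring
  have hΔ : ∀ w : ℝ × ℝ, ∑' jk, F jk w = ((‖jointCFNat φ w.1 w.2 - jointCFNat φ w.1 0 *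
      jointCFNat φ 0 w.2‖ ^ 2 / (w.1 ^ 2 * w.2 ^ 2) : ℝ) : ℂ) := by
    intro w
    refine (hasSum_integrand a lam w.1 w.2 _ ?_).tsum_eq
    simp only [jointCFNat_bivariate_poisson ha hlam hexp]
    simp only [Complex.ofReal_zero, mul_zero, Complex.exp_zero, sub_self, zero_mul, mul_one,
      one_mul]
    ring
  simp only [hval, hΔ] at h
  rw [integral_complex_ofReal, Complex.hasSum_ofReal] at h
  have h' := h.mul_left ((Real.pi * Real.pi)⁻¹)
  have hpi := Real.pi_ne_zero
  convert! h' using 1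
  funext jk
  field_simp
  simp only [hc]
  ring

/-! ### The distance covariance -/

/-- **Distance covariance of the bivariate Poisson distribution**: for `a > 0` and
`λ ∈ [0,1]`, if `(X,Y)` has joint density
`φ_X(x)φ_Y(y) Σ_n λ^n C_n(x;a) C_n(y;a)` on `ℕ₀ × ℕ₀`, then
`V²(X,Y) = Σ_{j,k≥1} 4^{j+k−1}/(j!k!) (λa)^{j+k} A_{jk}²`, the double series converging
absolutely, and moreover `V²(X,Y) ≤ (e^{4λa} − 1)²`. -/
theorem dcov_bivariate_poisson (a lam : ℝ) (ha : 0 < a)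
    (hlam : lam ∈ Set.Icc (0 : ℝ) 1) (φXY : ℕ → ℕ → ℝ)
    (hexp : ∀ x y : ℕ, φXY x y = poissonDensity a x * poissonDensity a y *
      ∑' n : ℕ, lam ^ n * charlier a n x * charlier a n y) :
    dcovNat φXY = (∑' jk : ℕ × ℕ,
        (4 : ℝ) ^ (jk.1 + jk.2 + 1) /
            ((Nat.factorial (jk.1 + 1) : ℝ) * Nat.factorial (jk.2 + 1)) *
          (lam * a) ^ (jk.1 + jk.2 + 2) * poisA a (jk.1 + 1) (jk.2 + 1) ^ 2) ∧
    Summable (fun jk : ℕ × ℕ =>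
      |(4 : ℝ) ^ (jk.1 + jk.2 + 1) /
          ((Nat.factorial (jk.1 + 1) : ℝ) * Nat.factorial (jk.2 + 1)) *
        (lam * a) ^ (jk.1 + jk.2 + 2) * poisA a (jk.1 + 1) (jk.2 + 1) ^ 2|) ∧
    dcovNat φXY ≤ (Real.exp (4 * lam * a) - 1) ^ 2 := by
  have hb : 0 ≤ lam * a := mul_nonneg hlam.1 ha.le
  have hterm : ∀ jk : ℕ × ℕ, (4 : ℝ) ^ (jk.1 + jk.2 + 1) /
          ((Nat.factorial (jk.1 + 1) : ℝ) * Nat.factorial (jk.2 + 1)) *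
        (lam * a) ^ (jk.1 + jk.2 + 2) * poisA a (jk.1 + 1) (jk.2 + 1) ^ 2 =
      expCoeff (lam * a) jk.1 * expCoeff (lam * a) jk.2 *
        (2 ^ (jk.1 + jk.2 + 1) * poisA a (jk.1 + 1) (jk.2 + 1)) ^ 2 := by
    intro jk
    have h4 : ((2 : ℝ) ^ (jk.1 + jk.2 + 1)) ^ 2 = 4 ^ (jk.1 + jk.2 + 1) := by
      rw [← pow_mul, mul_comm, pow_mul]; norm_num
    rw [mul_pow ((2 : ℝ) ^ (jk.1 + jk.2 + 1)) (poisA a (jk.1 + 1) (jk.2 + 1)), h4, expCoeff, expCoeff,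
      div_mul_div_comm, ← pow_add,
      show jk.1 + 1 + (jk.2 + 1) = jk.1 + jk.2 + 2 by ring]
    ring
  have h := hasSum_dcovNat ha hlam hexp
  simp only [← hterm] at h
  refine ⟨h.tsum_eq.symm, h.summable.abs, ?_⟩
  have hs := hasSum_expCoeff_mul_pow (lam * a) 4
  have hnn : 0 ≤ fun j => expCoeff (lam * a) j * (4 : ℝ) ^ (j + 1) :=
    fun j => mul_nonneg (expCoeff_nonneg hb j) (by positivity)
  have hprod := hs.mul hs (hs.summable.mul_of_nonneg hs.summable hnn hnn)
  have hle := hasSum_le (fun jk => ?_) h hprod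
  · rw [show lam * a * 4 = 4 * lam * a by ring] at hle
    rwa [sq]
  · -- `A_{jk}² ≤ 1`; a spare factor `1/4` is discarded
    rw [hterm, mul_pow]
    have hc : 0 ≤ expCoeff (lam * a) jk.1 * expCoeff (lam * a) jk.2 :=
      mul_nonneg (expCoeff_nonneg hb _) (expCoeff_nonneg hb _)
    have h4 : ((2 : ℝ) ^ (jk.1 + jk.2 + 1)) ^ 2 = 4 ^ (jk.1 + jk.2 + 1) := by
      rw [← pow_mul, mul_comm, pow_mul]; norm_num
    calc _ ≤ expCoeff (lam * a) jk.1 * expCoeff (lam * a) jk.2 *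
          (4 ^ (jk.1 + jk.2 + 1) * 1) := by
          rw [h4]
          gcongr
          exact poisA_sq_le_one ha _ _
      _ ≤ expCoeff (lam * a) jk.1 * expCoeff (lam * a) jk.2 * (4 ^ (jk.1 + jk.2 + 2)) := by
          rw [mul_one]
          gcongr
          · norm_num
          · omega
      _ = _ := by ring
end

section
/- For every n ∈ ℕ₀ and every s ∈ ℝ, ∫_ℝ exp(isx) (2π)^{−1/2} exp(−x²/2) H_n(x) dx = (is)^n exp(−s²/2), where H_n is the n-th probabilists' Hermite polynomial. -/
/-!
With `φ x = exp (-x² / 2)`, the recurrence `H_{n+1} = X * H_n - H_n'` says exactly that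
`φ * H_{n+1} = -(φ * H_n)'`. So integrating by parts against `exp (i s x)` multiplies the Fourier
integral by `i s` each time `n` increases by one; formally, the derivative of the integrable
function `exp (i s x) φ(x) H_n(x)` has integral zero. The case `n = 0` is the Fourier transform of
the Gaussian, available as `fourierIntegral_gaussian`.
-/

open MeasureTheory

/-- The `n`-th probabilists' Hermite polynomial, evaluated at `x`. -/
noncomputable def hermiteFn (n : ℕ) (x : ℝ) : ℝ :=
  Polynomial.aeval x (Polynomial.hermite n)

theorem integrable_exp_mul_aeval (p : Polynomial ℤ) :
    Integrable fun x : ℝ => Real.exp (-(x ^ 2) / 2) * Polynomial.aeval x p := by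
  induction p using Polynomial.induction_on' with
  | add p q hp hq =>
    simp only [map_add, mul_add]
    exact hp.add hq
  | monomial k a =>
    have h := (integrable_rpow_mul_exp_neg_mul_sq (b := 1 / 2) (by norm_num) (s := (k : ℝ))
      (by have : (0 : ℝ) ≤ k := k.cast_nonneg
          linarith)).const_mul (a : ℝ)
    refine h.congr (Filter.Eventually.of_forall fun x => ?_)
    simp only [Polynomial.aeval_monomial, Real.rpow_natCast, eq_intCast]
    rw [show -(1 / 2 : ℝ) * x ^ 2 = -(x ^ 2) / 2 by ring]
    ring

theorem integrable_cexp_mul_exp_mul_hermiteFn (n : ℕ) (s : ℝ) :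
    Integrable fun x : ℝ => Complex.exp (Complex.I * (s * x)) *
      ((Real.exp (-(x ^ 2) / 2) * hermiteFn n x : ℝ) : ℂ) := by
  refine (integrable_exp_mul_aeval (Polynomial.hermite n)).ofReal.bdd_mul (c := 1)
    (Continuous.aestronglyMeasurable (by fun_prop)) (Filter.Eventually.of_forall fun x => ?_)
  rw [← Complex.ofReal_mul, Complex.norm_exp_I_mul_ofReal]

theorem hasDerivAt_exp_mul_hermiteFn (n : ℕ) (x : ℝ) :
    HasDerivAt (fun x : ℝ => Real.exp (-(x ^ 2) / 2) * hermiteFn n x)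
      (-(Real.exp (-(x ^ 2) / 2) * hermiteFn (n + 1) x)) x := by
  have h1 : HasDerivAt (fun x : ℝ => -(x ^ 2) / 2) (-x) x := by
    have := (hasDerivAt_pow 2 x).neg.div_const 2
    refine this.congr_deriv ?_
    norm_num
    ring
  have h2 := h1.exp.mul ((Polynomial.hermite n).hasDerivAt_aeval x)
  refine h2.congr_deriv ?_
  simp only [hermiteFn, Polynomial.hermite_succ, map_sub, map_mul, Polynomial.aeval_X]
  ring

/-- Integration by parts: passing from `H_n` to `H_{n+1}` multiplies the Fourier integral by
`i s`. -/
theorem integral_hermiteFn_succ (n : ℕ) (s : ℝ) :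
    ∫ x : ℝ, Complex.exp (Complex.I * (s * x)) *
      ((Real.exp (-(x ^ 2) / 2) * hermiteFn (n + 1) x : ℝ) : ℂ) =
    Complex.I * s * ∫ x : ℝ, Complex.exp (Complex.I * (s * x)) *
      ((Real.exp (-(x ^ 2) / 2) * hermiteFn n x : ℝ) : ℂ) := by
  have hn := integrable_cexp_mul_exp_mul_hermiteFn n s
  have hn1 := integrable_cexp_mul_exp_mul_hermiteFn (n + 1) s
  have hd := hn.const_mul (Complex.I * s)
  have key := integral_eq_zero_of_hasDerivAt_of_integrable (fun x => ?_) (hd.sub hn1) hn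
  · simp only [Pi.sub_apply] at key
    rw [integral_sub hd hn1, integral_const_mul, sub_eq_zero] at key
    exact key.symm
  · have h1 : HasDerivAt (fun x : ℝ => Complex.exp (Complex.I * (s * x)))
        (Complex.exp (Complex.I * (s * x)) * (Complex.I * (s * 1))) x :=
      (((Complex.ofRealCLM.hasDerivAt (x := x)).const_mul (s : ℂ)).const_mul Complex.I).cexp
    have h2 := h1.mul (hasDerivAt_exp_mul_hermiteFn n x).ofReal_comp
    refine h2.congr_deriv ?_
    simp only [Pi.sub_apply]
    push_cast
    ring

/-- The case `n = 0`, up to the normalising constant. -/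
theorem integral_hermiteFn_zero (s : ℝ) :
    ∫ x : ℝ, Complex.exp (Complex.I * (s * x)) *
      ((Real.exp (-(x ^ 2) / 2) * hermiteFn 0 x : ℝ) : ℂ) =
    (((2 * Real.pi) ^ (1 / 2 : ℝ) : ℝ) : ℂ) * Complex.exp (-(s : ℂ) ^ 2 / 2) := by
  have h := fourierIntegral_gaussian (b := 1 / 2) (by norm_num) (s : ℂ)
  rw [Complex.ofReal_cpow (by positivity)]
  convert h using 3 with x
  · rw [mul_assoc]
    congr 1
    simp only [hermiteFn, Polynomial.hermite_zero, map_one, mul_one]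
    push_cast
    congr 1
    ring
  · push_cast
    ring
  · push_cast
    rfl
  · ring

/-- **Fourier transform of Hermite polynomials against the standard normal density**:
`∫ exp(isx)(2π)^{−1/2} exp(−x²/2) H_n(x) dx = (is)^n exp(−s²/2)`. -/
theorem fourier_hermite (n : ℕ) (s : ℝ) :
    ∫ x : ℝ, Complex.exp (Complex.I * (s * x)) *
      (((2 * Real.pi) ^ (-(1/2 : ℝ)) * Real.exp (-(x ^ 2) / 2) * hermiteFn n x : ℝ) : ℂ) =
    (Complex.I * s) ^ n * Complex.exp (-(s : ℂ) ^ 2 / 2) := by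
  have h (n : ℕ) : ∫ x : ℝ, Complex.exp (Complex.I * (s * x)) *
      ((Real.exp (-(x ^ 2) / 2) * hermiteFn n x : ℝ) : ℂ) = (Complex.I * s) ^ n *
      ((((2 * Real.pi) ^ (1 / 2 : ℝ) : ℝ) : ℂ) * Complex.exp (-(s : ℂ) ^ 2 / 2)) := by
    induction n with
    | zero => rw [integral_hermiteFn_zero, pow_zero, one_mul]
    | succ n ih => rw [integral_hermiteFn_succ, ih, pow_succ']; ring
  have hc : (((2 * Real.pi) ^ (-(1/2 : ℝ)) : ℝ) : ℂ) * (((2 * Real.pi) ^ (1 / 2 : ℝ) : ℝ) : ℂ)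
      = 1 := by
    rw [← Complex.ofReal_mul, ← Real.rpow_add (by positivity)]
    simp
  calc _ = ∫ x : ℝ, (((2 * Real.pi) ^ (-(1/2 : ℝ)) : ℝ) : ℂ) *
        (Complex.exp (Complex.I * (s * x)) *
          ((Real.exp (-(x ^ 2) / 2) * hermiteFn n x : ℝ) : ℂ)) := by
        refine integral_congr_ae (Filter.Eventually.of_forall fun x => ?_)
        simp only [Complex.ofReal_mul]
        ring
    _ = _ := by
        rw [integral_const_mul, h]
        linear_combination (Complex.I * s) ^ n * Complex.exp (-(s : ℂ) ^ 2 / 2) * hc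
end

section
/- For every α > 0, n ∈ ℕ₀, and s ∈ ℝ, ∫_0^∞ exp(isx) L_n^{(α−1)}(x) x^{α−1} exp(−x)/Γ(α) dx = ((α)_n/n!)^{1/2} (1 − is)^{−(α+n)} (−is)^n, where the complex power (1 − is)^{−(α+n)} is taken with the principal branch. -/
/-! The integral `∫_0^∞ x^(b-1) e^{-x} e^{isx} dx` equals `Γ(b) (1 - is)^{-b}` for `b > 0`
(`gammaFourier_eq`). As a function of `s` it has derivative `i` times the same integral with
exponent `b + 1`, and integration by parts shows that `1 - is` times the latter is `b` times the
former; hence the product of the integral with `(1 - is)^b` is constant, equal to `Γ(b)` at `s = 0`.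

Integrating the Laguerre polynomial term by term then gives `Γ(α + j) = (α)_j Γ(α)` in each
numerator, which cancels `(α)_j`, and since `(-n)_j / j! = (-1)^j C(n, j)` what remains is the
binomial expansion of `(1 - 1/w)^n` with `w = 1 - is`. -/

open MeasureTheory

/-- The orthonormal Laguerre polynomial
`L_n^{(α)}(x) = ((α+1)_n/n!)^{1/2} Σ_{j=0}^n (−n)_j x^j / ((α+1)_j j!)`. -/
noncomputable def laguerreFn (α : ℝ) (n : ℕ) (x : ℝ) : ℝ :=
  Real.sqrt (poch (α + 1) n / Nat.factorial n) *
    ∑ j ∈ Finset.range (n + 1),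
      poch (-(n : ℝ)) j * x ^ j / (poch (α + 1) j * Nat.factorial j)

/-- The unnormalised Fourier integrand of the gamma density with shape `b`. -/
noncomputable def gammaFourierIntegrand (b s x : ℝ) : ℂ :=
  ((x ^ (b - 1) * Real.exp (-x) : ℝ) : ℂ) * Complex.exp (Complex.I * (s * x))

/-- The Fourier transform at `s` of the unnormalised gamma density with shape `b`. -/
noncomputable def gammaFourier (b s : ℝ) : ℂ :=
  ∫ x in Set.Ioi (0 : ℝ), gammaFourierIntegrand b s x

lemma norm_exp_I_mul (s x : ℝ) : ‖Complex.exp (Complex.I * (s * x))‖ = 1 := by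
  rw [mul_comm, ← Complex.ofReal_mul, Complex.norm_exp_ofReal_mul_I]

lemma integrableOn_gammaDensity {b : ℝ} (hb : 0 < b) :
    IntegrableOn (fun x : ℝ => x ^ (b - 1) * Real.exp (-x)) (Set.Ioi 0) := by
  simpa only [mul_comm] using Real.GammaIntegral_convergent hb

lemma integrableOn_gammaFourierIntegrand {b : ℝ} (hb : 0 < b) (s : ℝ) :
    IntegrableOn (gammaFourierIntegrand b s) (Set.Ioi 0) := by
  refine Integrable.mul_bdd (c := 1) (integrableOn_gammaDensity hb).ofReal ?_ ?_
  · exact (by fun_prop : Continuous fun x : ℝ =>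
      Complex.exp (Complex.I * (s * x))).aestronglyMeasurable
  · exact Filter.Eventually.of_forall fun x => (norm_exp_I_mul s x).le

/-- Multiplying the integrand by `x` raises the shape by one. -/
lemma gammaFourierIntegrand_add_one (b s : ℝ) {x : ℝ} (hx : 0 < x) :
    gammaFourierIntegrand (b + 1) s x = x * gammaFourierIntegrand b s x := by
  have : x ^ (b + 1 - 1) = x * x ^ (b - 1) := by
    rw [show b + 1 - 1 = 1 + (b - 1) by ring, Real.rpow_add hx, Real.rpow_one]
  simp only [gammaFourierIntegrand, this]
  push_cast
  ring

lemma gammaFourierIntegrand_add_nat (b s : ℝ) (j : ℕ) {x : ℝ} (hx : 0 < x) :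
    gammaFourierIntegrand (b + j) s x = x ^ j * gammaFourierIntegrand b s x := by
  induction j with
  | zero => simp
  | succ j ih =>
    rw [Nat.cast_succ, ← add_assoc, gammaFourierIntegrand_add_one _ _ hx, ih]
    ring

lemma norm_gammaFourierIntegrand (b s : ℝ) {x : ℝ} (hx : 0 < x) :
    ‖gammaFourierIntegrand b s x‖ = x ^ (b - 1) * Real.exp (-x) := by
  rw [gammaFourierIntegrand, norm_mul, norm_exp_I_mul, mul_one, Complex.norm_real,
    Real.norm_of_nonneg (by positivity)]

/-- Differentiation under the integral sign; the dominating function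
`x ^ b * exp (-x)` does not depend on `s`. -/
lemma hasDerivAt_gammaFourier {b : ℝ} (hb : 0 < b) (s : ℝ) :
    HasDerivAt (gammaFourier b) (Complex.I * gammaFourier (b + 1) s) s := by
  have key := (hasDerivAt_integral_of_dominated_loc_of_deriv_le
    (μ := volume.restrict (Set.Ioi (0 : ℝ)))
    (F := fun s x => gammaFourierIntegrand b s x)
    (F' := fun s x => Complex.I * gammaFourierIntegrand (b + 1) s x)
    (x₀ := s) (s := Set.univ) (bound := fun x => x ^ (b + 1 - 1) * Real.exp (-x))
    Filter.univ_mem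
    (Filter.Eventually.of_forall fun t =>
      (integrableOn_gammaFourierIntegrand hb t).aestronglyMeasurable)
    (integrableOn_gammaFourierIntegrand hb s)
    ((integrableOn_gammaFourierIntegrand (by linarith : 0 < b + 1) s).const_mul
      _).aestronglyMeasurable
    ?_ (integrableOn_gammaDensity (by linarith)) ?_).2
  · rw [integral_const_mul] at key
    exact key
  · filter_upwards [ae_restrict_mem measurableSet_Ioi] with x hx t _
    rw [norm_mul, Complex.norm_I, one_mul, norm_gammaFourierIntegrand _ _ hx]
  · filter_upwards [ae_restrict_mem measurableSet_Ioi] with x hx t _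
    rw [gammaFourierIntegrand_add_one _ _ hx]
    have h1 : HasDerivAt (fun t : ℝ => Complex.I * ((t : ℂ) * x)) (Complex.I * (1 * x)) t :=
      ((Complex.ofRealCLM.hasDerivAt (x := t)).mul_const (x : ℂ)).const_mul Complex.I
    refine (h1.cexp.const_mul ((x ^ (b - 1) * Real.exp (-x) : ℝ) : ℂ)).congr_deriv ?_
    simp only [gammaFourierIntegrand]
    ring

/-- Integration by parts: with `w = 1 - is`, the difference of the two sides is, up to sign, the
integral of the derivative of `x ^ b * exp (-w x)`, which vanishes at `0` and at infinity. -/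
lemma gammaFourier_add_one {b : ℝ} (hb : 0 < b) (s : ℝ) :
    (1 - Complex.I * s) * gammaFourier (b + 1) s = b * gammaFourier b s := by
  have hb1 : 0 < b + 1 := by linarith
  have hi1 := (integrableOn_gammaFourierIntegrand hb s).const_mul (b : ℂ)
  have hi2 := (integrableOn_gammaFourierIntegrand hb1 s).const_mul (1 - Complex.I * s)
  have hderiv : ∀ x ∈ Set.Ioi (0 : ℝ), HasDerivAt (gammaFourierIntegrand (b + 1) s)
      (b * gammaFourierIntegrand b s x
        - (1 - Complex.I * s) * gammaFourierIntegrand (b + 1) s x) x := by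
    intro x hx
    have h1 : HasDerivAt (fun x : ℝ => x ^ (b + 1 - 1) * Real.exp (-x)) _ x :=
      (Real.hasDerivAt_rpow_const (Or.inl (ne_of_gt hx))).mul (hasDerivAt_neg x).exp
    have h2 : HasDerivAt (fun x : ℝ => Complex.I * ((s : ℂ) * x)) (Complex.I * (s * 1)) x :=
      ((Complex.ofRealCLM.hasDerivAt (x := x)).const_mul (s : ℂ)).const_mul Complex.I
    refine (h1.ofReal_comp.mul h2.cexp).congr_deriv ?_
    simp only [gammaFourierIntegrand, add_sub_cancel_right]
    push_cast
    ring
  have hnorm : ∀ x ∈ Set.Ioi (0 : ℝ),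
      x ^ b * Real.exp (-x) = ‖gammaFourierIntegrand (b + 1) s x‖ := by
    intro x hx
    rw [norm_gammaFourierIntegrand _ _ hx, add_sub_cancel_right]
  have hcont : Continuous (gammaFourierIntegrand (b + 1) s) := by
    have hc : Continuous fun x : ℝ => x ^ (b + 1 - 1) * Real.exp (-x) :=
      (Real.continuous_rpow_const (by linarith)).mul (by fun_prop)
    exact (Complex.continuous_ofReal.comp hc).mul (by fun_prop)
  have hzero : gammaFourierIntegrand (b + 1) s 0 = 0 := by
    simp [gammaFourierIntegrand, Real.zero_rpow hb.ne']
  have htop : Filter.Tendsto (gammaFourierIntegrand (b + 1) s) Filter.atTop (nhds 0) := by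
    rw [tendsto_zero_iff_norm_tendsto_zero]
    have := tendsto_rpow_mul_exp_neg_mul_atTop_nhds_zero b 1 one_pos
    simp only [neg_mul, one_mul] at this
    exact this.congr' (Filter.eventuallyEq_of_mem (Filter.Ioi_mem_atTop 0) hnorm)
  have h := integral_Ioi_of_hasDerivAt_of_tendsto hcont.continuousWithinAt hderiv
    (hi1.sub hi2) htop
  rw [integral_sub hi1 hi2, integral_const_mul, integral_const_mul, hzero,
    sub_zero] at h
  exact (sub_eq_zero.mp h).symm

lemma one_sub_I_mul_mem_slitPlane (s : ℝ) : 1 - Complex.I * s ∈ Complex.slitPlane :=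
  Or.inl (by simp)

/-- The characteristic function of the gamma distribution, up to normalisation. -/
lemma gammaFourier_eq {b : ℝ} (hb : 0 < b) (s : ℝ) :
    gammaFourier b s = Real.Gamma b * (1 - Complex.I * s) ^ (-(b : ℂ)) := by
  have hd : ∀ t : ℝ, HasDerivAt
      (fun t : ℝ => gammaFourier b t * (1 - Complex.I * t) ^ (b : ℂ)) 0 t := by
    intro t
    have hw := Complex.slitPlane_ne_zero (one_sub_I_mul_mem_slitPlane t)
    have h1 : HasDerivAt (fun z : ℂ => 1 - Complex.I * z) (-(Complex.I * 1)) (t : ℂ) :=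
      ((hasDerivAt_id (t : ℂ)).const_mul Complex.I).const_sub 1
    have h2 := (h1.cpow_const (c := (b : ℂ)) (one_sub_I_mul_mem_slitPlane t)).comp_ofReal
    refine ((hasDerivAt_gammaFourier hb t).mul h2).congr_deriv ?_
    have h3 := gammaFourier_add_one hb t
    rw [Complex.cpow_sub _ _ hw, Complex.cpow_one]
    field_simp
    linear_combination Complex.I * (1 - Complex.I * t) ^ (b : ℂ) * h3
  have hconst := is_const_of_deriv_eq_zero (fun t => (hd t).differentiableAt)
    (fun t => (hd t).deriv) s 0
  have h0 : gammaFourier b 0 = Real.Gamma b := by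
    rw [Real.Gamma_eq_integral hb, gammaFourier, ← integral_complex_ofReal]
    simp [gammaFourierIntegrand, mul_comm]
  have hw := Complex.slitPlane_ne_zero (one_sub_I_mul_mem_slitPlane s)
  have hwb : (1 - Complex.I * s) ^ (b : ℂ) ≠ 0 := by simp [Complex.cpow_eq_zero_iff, hw]
  simp only [h0, Complex.ofReal_zero, mul_zero, sub_zero, Complex.one_cpow, mul_one] at hconst
  rw [Complex.cpow_neg, ← hconst]
  field_simp

lemma poch_pos {a : ℝ} (ha : 0 < a) (j : ℕ) : 0 < poch a j := ascPochhammer_pos j a ha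

lemma Gamma_add_nat {a : ℝ} (ha : 0 < a) (j : ℕ) :
    Real.Gamma (a + j) = poch a j * Real.Gamma a := by
  induction j with
  | zero => simp [poch]
  | succ j ih =>
    rw [Nat.cast_succ, ← add_assoc, Real.Gamma_add_one (by positivity), ih, poch, poch,
      ascPochhammer_succ_eval]
    ring

lemma poch_neg_nat (n j : ℕ) :
    poch (-(n : ℝ)) j = (-1) ^ j * n.choose j * j.factorial := by
  rw [poch, ascPochhammer_eval_neg_eq_descPochhammer, descPochhammer_eval_eq_descFactorial,
    Nat.descFactorial_eq_factorial_mul_choose]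
  push_cast
  ring

/-- **Fourier–Laplace transform of Laguerre polynomials against the gamma density**:
for `α > 0`, `∫_0^∞ exp(isx) L_n^{(α−1)}(x) x^{α−1} e^{−x}/Γ(α) dx
 = ((α)_n/n!)^{1/2} (1 − is)^{−(α+n)} (−is)^n` (principal branch). -/
theorem fourier_laguerre (α : ℝ) (hα : 0 < α) (n : ℕ) (s : ℝ) :
    ∫ x in Set.Ioi (0 : ℝ), Complex.exp (Complex.I * (s * x)) *
      ((laguerreFn (α - 1) n x * (x ^ (α - 1) * Real.exp (-x) / Real.Gamma α) : ℝ) : ℂ) =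
    ((Real.sqrt (poch α n / Nat.factorial n) : ℝ) : ℂ) *
      (1 - Complex.I * s) ^ (-((α : ℂ) + n)) * (-(Complex.I * s)) ^ n := by
  have hw := Complex.slitPlane_ne_zero (one_sub_I_mul_mem_slitPlane s)
  have hΓ : (Real.Gamma α : ℂ) ≠ 0 := by exact_mod_cast (Real.Gamma_pos_of_pos hα).ne'
  set w : ℂ := 1 - Complex.I * s with hwdef
  set C : ℂ := ((Real.sqrt (poch α n / Nat.factorial n) : ℝ) : ℂ)
  have hint : ∀ x ∈ Set.Ioi (0 : ℝ), Complex.exp (Complex.I * (s * x)) *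
      ((laguerreFn (α - 1) n x * (x ^ (α - 1) * Real.exp (-x) / Real.Gamma α) : ℝ) : ℂ) =
      ∑ j ∈ Finset.range (n + 1), C * ((-1) ^ j * n.choose j / (poch α j * Real.Gamma α)) *
        gammaFourierIntegrand (α + j) s x := by
    intro x hx
    have hL : laguerreFn (α - 1) n x = Real.sqrt (poch α n / Nat.factorial n) *
        ∑ j ∈ Finset.range (n + 1), (-1) ^ j * n.choose j / poch α j * x ^ j := by
      rw [laguerreFn, sub_add_cancel]
      congr 1
      refine Finset.sum_congr rfl fun j _ => ?_
      have := (poch_pos hα j).ne'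
      rw [poch_neg_nat]
      field_simp
    rw [hL]
    push_cast
    -- fold the square root brought in by `hL` back into `C`
    change _ * (C * _ * _) = _
    rw [Finset.mul_sum, Finset.sum_mul, Finset.mul_sum]
    refine Finset.sum_congr rfl fun j _ => ?_
    rw [gammaFourierIntegrand_add_nat _ _ _ hx, gammaFourierIntegrand]
    have : (poch α j : ℂ) ≠ 0 := by exact_mod_cast (poch_pos hα j).ne'
    push_cast
    field_simp
  rw [setIntegral_congr_fun measurableSet_Ioi hint, integral_finsetSum _ fun (j : ℕ) _ =>
    Integrable.const_mul (integrableOn_gammaFourierIntegrand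
      (by positivity : 0 < α + (j : ℝ)) s) (C * ((-1) ^ j * n.choose j /
        (poch α j * Real.Gamma α)))]
  have hterm : ∀ j ∈ Finset.range (n + 1),
      ∫ x in Set.Ioi (0 : ℝ), C * ((-1) ^ j * n.choose j / (poch α j * Real.Gamma α)) *
        gammaFourierIntegrand (α + j) s x =
      C * w ^ (-(α : ℂ)) * ((-w⁻¹) ^ j * 1 ^ (n - j) * n.choose j) := by
    intro j _
    have hp : (poch α j : ℂ) ≠ 0 := by exact_mod_cast (poch_pos hα j).ne'
    rw [integral_const_mul, ← gammaFourier, gammaFourier_eq (by positivity), Gamma_add_nat hα,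
      ← hwdef]
    push_cast
    rw [neg_add, Complex.cpow_add _ _ hw, Complex.cpow_neg w (j : ℂ), Complex.cpow_natCast,
      neg_pow w⁻¹, inv_pow, one_pow]
    field_simp
  rw [Finset.sum_congr rfl hterm, ← Finset.mul_sum, ← add_pow, neg_add, Complex.cpow_add _ _ hw,
    Complex.cpow_neg w (n : ℂ), Complex.cpow_natCast]
  have h1 : -w⁻¹ + 1 = w⁻¹ * -(Complex.I * s) := by
    field_simp
    rw [hwdef]
    ring
  rw [h1, mul_pow, inv_pow]
  ring
end

section
/- For every a > 0, n ∈ ℕ₀, and s ∈ ℝ, Σ_{x=0}^∞ exp(isx) C_n(x;a) e^{−a} a^x / x! = (a^n/n!)^{1/2} (1 − e^{is})^n exp(−a(1 − e^{is})). -/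
/-- The factorial moments of the exponential series: `∑ₓ C(x,k) k! wˣ / x! = wᵏ eʷ`. -/
theorem hasSum_choose_mul_pow_div_factorial (w : ℂ) (k : ℕ) :
    HasSum (fun x : ℕ => (x.choose k : ℂ) * k.factorial * (w ^ x / x.factorial))
      (w ^ k * Complex.exp w) := by
  -- the terms with `x < k` vanish, so only the series reindexed by `x ↦ x + k` matters
  rw [← (add_left_injective k).hasSum_iff]
  · have h := NormedSpace.expSeries_div_hasSum_exp w
    rw [← Complex.exp_eq_exp_ℂ] at h
    refine Eq.subst (motive := fun f : ℕ → ℂ => HasSum f (w ^ k * Complex.exp w))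
      (funext fun x => ?_) (h.mul_left (w ^ k))
    have hc : ((x + k).choose k : ℂ) * k.factorial * x.factorial = (x + k).factorial := by
      have := Nat.add_choose_mul_factorial_mul_factorial x k
      rw [← this]
      push_cast
      ring
    have h₁ : ((x + k).factorial : ℂ) ≠ 0 := by exact_mod_cast (x + k).factorial_ne_zero
    have h₂ : (x.factorial : ℂ) ≠ 0 := by exact_mod_cast x.factorial_ne_zero
    simp only [Function.comp_apply]
    field_simp
    rw [pow_add]
    linear_combination w ^ x * w ^ k * -hc
  · intro x hx
    have hxk : x < k := by
      by_contra! hle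
      exact hx ⟨x - k, Nat.sub_add_cancel hle⟩
    simp [Nat.choose_eq_zero_of_lt hxk]

/-- **Fourier transform of Poisson–Charlier polynomials against the Poisson distribution**:
for `a > 0`, `Σ_{x=0}^∞ exp(isx) C_n(x;a) e^{−a} a^x/x!
 = (a^n/n!)^{1/2} (1 − e^{is})^n exp(−a(1 − e^{is}))`. -/
theorem fourier_charlier (a : ℝ) (ha : 0 < a) (n : ℕ) (s : ℝ) :
    ∑' x : ℕ, Complex.exp (Complex.I * (s * x)) *
      ((charlier a n x * (Real.exp (-a) * a ^ x / Nat.factorial x) : ℝ) : ℂ) =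
    ((Real.sqrt (a ^ n / Nat.factorial n) : ℝ) : ℂ) *
      (1 - Complex.exp (Complex.I * s)) ^ n *
      Complex.exp (-(a : ℂ) * (1 - Complex.exp (Complex.I * s))) := by
  have ha' : (a : ℂ) ≠ 0 := by exact_mod_cast ha.ne'
  set z := Complex.exp (Complex.I * s) with hz
  set r : ℂ := ((Real.sqrt (a ^ n / Nat.factorial n) : ℝ) : ℂ) with hr
  have key : HasSum (fun x : ℕ => r * Complex.exp (-a) *
      ∑ k ∈ Finset.range (n + 1), (-1 : ℂ) ^ k * (n.choose k) / (a : ℂ) ^ k *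
        ((x.choose k : ℂ) * k.factorial * ((a * z) ^ x / x.factorial)))
      (r * Complex.exp (-a) * ∑ k ∈ Finset.range (n + 1),
        (-1 : ℂ) ^ k * (n.choose k) / (a : ℂ) ^ k * ((a * z) ^ k * Complex.exp (a * z))) :=
    (hasSum_sum fun k _ => (hasSum_choose_mul_pow_div_factorial (a * z) k).mul_left _).mul_left _
  have hterm : ∀ x : ℕ, Complex.exp (Complex.I * (s * x)) *
      ((charlier a n x * (Real.exp (-a) * a ^ x / Nat.factorial x) : ℝ) : ℂ) =
      r * Complex.exp (-a) *
      ∑ k ∈ Finset.range (n + 1), (-1 : ℂ) ^ k * (n.choose k) / (a : ℂ) ^ k *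
        ((x.choose k : ℂ) * k.factorial * ((a * z) ^ x / x.factorial)) := by
    intro x
    have hzx : Complex.exp (Complex.I * (s * x)) = z ^ x := by
      rw [hz, ← Complex.exp_nat_mul]
      ring_nf
    rw [hzx, charlier]
    push_cast
    rw [← hr, Finset.mul_sum, Finset.mul_sum, Finset.sum_mul, Finset.mul_sum]
    refine Finset.sum_congr rfl fun k _ => ?_
    rw [mul_pow]
    ring
  have hbinom : ∑ k ∈ Finset.range (n + 1),
      (-1 : ℂ) ^ k * (n.choose k) / (a : ℂ) ^ k * ((a * z) ^ k * Complex.exp (a * z)) =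
      (1 - z) ^ n * Complex.exp (a * z) := by
    rw [sub_eq_neg_add, add_pow, Finset.sum_mul]
    refine Finset.sum_congr rfl fun k _ => ?_
    rw [mul_pow, neg_pow z, one_pow]
    field_simp
  have hexp : Complex.exp (-(a : ℂ) * (1 - z)) = Complex.exp (-a) * Complex.exp (a * z) := by
    rw [← Complex.exp_add]
    ring_nf
  rw [tsum_congr hterm, key.tsum_eq, hbinom, hexp]
  ring
end

section
/- For every ℓ ∈ ℕ₀ and every integer k ≥ 1, ∫_ℝ (cos(s/2))^{2ℓ} (sin(s/2))^{2k} s^{−2} ds = [(2ℓ−1)!! (2k−3)!! / (2ℓ+2k−2)!!] · (π/2). -/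
/-!
The substitution `s = 2πx` turns the integrand into a constant times
`g x * sin (πx) ^ 2 / (πx) ^ 2` with `g x = cos (πx) ^ (2ℓ) * sin (πx) ^ (2k - 2)`, a nonnegative
function of period `1`. By the Lobachevsky–Dirichlet formula (`integral_mul_sin_sq_div_sq`) the
kernel `sin (πx) ^ 2 / (πx) ^ 2` can be dropped at the price of integrating over one period only:
cutting `ℝ` into unit intervals and translating them to `(0, 1]` replaces the kernel by the sum of
its integer translates, and this sum is `1` (`hasSum_sin_sq_div_sq`), as Parseval's identity for
`t ↦ exp (-2πixt)` on `(0, 1]` shows. What is left is the Wallis-type integral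
`integral_cos_pow_mul_sin_pow`, which follows from `cos² = 1 - sin²` by induction on `ℓ`.
-/

open MeasureTheory

/-- The integer translates of `sin (πx) ^ 2 / (πx) ^ 2` sum to `1`: the `n`-th term is the squared
norm of the `n`-th Fourier coefficient of the unimodular function `t ↦ exp (-2πixt)` on `(0, 1]`,
so this is Parseval's identity. -/
theorem hasSum_sin_sq_div_sq (x : ℝ) (hx : ∀ n : ℤ, x + n ≠ 0) :
    HasSum (fun n : ℤ => Real.sin (Real.pi * (x + n)) ^ 2 / (Real.pi * (x + n)) ^ 2) 1 := by
  let f : ℝ → ℂ := fun t => Complex.exp ((-(2 * Real.pi * x) * Complex.I) * t)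
  have hf : Continuous f := by fun_prop
  have hnorm (t : ℝ) : ‖f t‖ = 1 := by
    have : f t = Complex.exp (((-(2 * Real.pi * x) * t : ℝ) : ℂ) * Complex.I) := by
      simp only [f]; push_cast; ring_nf
    rw [this, Complex.norm_exp_ofReal_mul_I]
  have hL2 : MemLp f 2 (volume.restrict (Set.Ioc (0 : ℝ) 1)) :=
    MemLp.of_bound hf.aestronglyMeasurable 1 (.of_forall fun t => (hnorm t).le)
  have h := hasSum_sq_fourierCoeffOn zero_lt_one hL2
  simp only [hnorm] at h
  norm_num at h
  refine h.congr_fun fun n => ?_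
  have hc : (-(2 * Real.pi * (x + n)) * Complex.I : ℂ) ≠ 0 := by
    have := hx n
    have : (x + n : ℂ) ≠ 0 := by exact_mod_cast this
    simp [Real.pi_ne_zero, this]
  rw [fourierCoeffOn_eq_integral]
  have hint : ∀ t : ℝ, fourier (-n) (t : AddCircle ((1 : ℝ) - 0)) • f t =
      Complex.exp ((-(2 * Real.pi * (x + n)) * Complex.I) * t) := by
    intro t
    rw [fourier_coe_apply, smul_eq_mul, ← Complex.exp_add]
    congr 1
    push_cast
    ring
  simp only [hint]
  rw [integral_exp_mul_complex hc]
  have he : Complex.exp ((-(2 * Real.pi * (x + n)) * Complex.I) * (1 : ℝ)) =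
      Complex.exp (Complex.I * ((-(2 * Real.pi * (x + n)) : ℝ) : ℂ)) := by
    push_cast; ring_nf
  rw [he]
  simp only [Complex.ofReal_zero, mul_zero, Complex.exp_zero, sub_zero, one_div, inv_one,
    one_smul, norm_div, Complex.norm_exp_I_mul_ofReal_sub_one]
  have h2 : ‖(-(2 * Real.pi * (x + n)) * Complex.I : ℂ)‖ = |2 * (Real.pi * (x + n))| := by
    rw [norm_mul, Complex.norm_I, mul_one, norm_neg, ← Real.norm_eq_abs, ← Complex.norm_real]
    push_cast; ring_nf
  have h3 : -(2 * Real.pi * (x + n)) / 2 = -(Real.pi * (x + n)) := by ring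
  rw [h2, h3, Real.sin_neg, div_pow, Real.norm_eq_abs, sq_abs, sq_abs, mul_pow 2, mul_pow 2, neg_sq,
    mul_div_mul_left _ _ (by norm_num)]

/-- The **Lobachevsky–Dirichlet formula** for a nonnegative function `g`. Nonnegativity makes the
interchange of sum and integral a matter of `lintegral_tsum`, with no integrability to check. -/
theorem integral_mul_sin_sq_div_sq (g : ℝ → ℝ) (hg : Continuous g) (h0 : ∀ x, 0 ≤ g x)
    (hper : Function.Periodic g 1) :
    ∫ x : ℝ, g x * (Real.sin (Real.pi * x) ^ 2 / (Real.pi * x) ^ 2) = ∫ x in (0 : ℝ)..1, g x := by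
  set F : ℝ → ℝ := fun x => g x * (Real.sin (Real.pi * x) ^ 2 / (Real.pi * x) ^ 2) with hF
  have hFm : Measurable F := by fun_prop
  have hF0 (x) : 0 ≤ F x := mul_nonneg (h0 x) (by positivity)
  rw [intervalIntegral.integral_of_le zero_le_one,
    integral_eq_lintegral_of_nonneg_ae (.of_forall hF0) hFm.aestronglyMeasurable,
    integral_eq_lintegral_of_nonneg_ae (.of_forall h0) hg.aestronglyMeasurable]
  congr 1
  calc ∫⁻ x, ENNReal.ofReal (F x)
      = ∑' n : ℤ, ∫⁻ x in Set.Ioc (n : ℝ) (n + 1), ENNReal.ofReal (F x) := by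
        rw [← lintegral_iUnion (fun _ => measurableSet_Ioc) (Set.pairwise_disjoint_Ioc_intCast ℝ),
          iUnion_Ioc_intCast, setLIntegral_univ]
    _ = ∑' n : ℤ, ∫⁻ x in Set.Ioc (0 : ℝ) 1, ENNReal.ofReal (F (x + n)) := by
        refine tsum_congr fun n => ?_
        rw [← (measurePreserving_add_right volume (n : ℝ)).setLIntegral_comp_preimage_emb
          (measurableEmbedding_addRight _)]
        simp
    _ = ∫⁻ x in Set.Ioc (0 : ℝ) 1, ∑' n : ℤ, ENNReal.ofReal (F (x + n)) := by
        rw [lintegral_tsum fun n => by fun_prop]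
    _ = ∫⁻ x in Set.Ioc (0 : ℝ) 1, ENNReal.ofReal (g x) := by
        refine lintegral_congr_ae (ae_restrict_of_ae ?_)
        -- The series is evaluated off the integers, where no denominator vanishes.
        have hae : ∀ᵐ x : ℝ, ∀ n : ℤ, x ≠ -(n : ℝ) :=
          ae_all_iff.2 fun n => Measure.ae_ne volume _
        filter_upwards [hae] with x hx
        have hs := (hasSum_sin_sq_div_sq x fun n h => hx n (by linarith)).mul_left (g x)
        have hgn (n : ℤ) : g (x + n) = g x := by simpa using hper.int_mul n x
        simp only [hF, hgn]
        rw [← ENNReal.ofReal_tsum_of_nonneg (fun n => mul_nonneg (h0 x) (by positivity))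
          hs.summable, hs.tsum_eq, mul_one]

/-- The even-exponent Wallis integral in two parameters. The truncated `2 * 0 - 1 = 0` is harmless,
since `0‼ = 1` agrees with the convention `(-1)‼ = 1`. -/
theorem integral_cos_pow_mul_sin_pow (m ℓ : ℕ) :
    ∫ x in (0 : ℝ)..Real.pi, Real.cos x ^ (2 * ℓ) * Real.sin x ^ (2 * m) =
      ((Nat.doubleFactorial (2 * ℓ - 1) : ℝ) * Nat.doubleFactorial (2 * m - 1)) /
        Nat.doubleFactorial (2 * ℓ + 2 * m) * Real.pi := by
  have hodd (n : ℕ) : Nat.doubleFactorial (2 * (n + 1) - 1) =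
      (2 * n + 1) * Nat.doubleFactorial (2 * n - 1) := Nat.doubleFactorial_add_one _
  induction ℓ generalizing m with
  | zero =>
    simp only [mul_zero, pow_zero, one_mul]
    induction m with
    | zero => simp
    | succ m ih =>
      have he : Nat.doubleFactorial (0 + 2 * (m + 1)) =
        (2 * m + 2) * Nat.doubleFactorial (0 + 2 * m) := by
          rw [zero_add, zero_add, mul_add]; exact Nat.doubleFactorial_add_two _
      have hne : (Nat.doubleFactorial (0 + 2 * m) : ℝ) ≠ 0 := by positivity
      rw [hodd, he, mul_add, mul_one, integral_sin_pow, ih]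
      simp
      field_simp
  | succ ℓ ih =>
    have he : Nat.doubleFactorial (2 * (ℓ + 1) + 2 * m) =
        (2 * ℓ + 2 * m + 2) * Nat.doubleFactorial (2 * ℓ + 2 * m) := by
      rw [← Nat.doubleFactorial_add_two]; congr 1; ring
    have he' : Nat.doubleFactorial (2 * ℓ + 2 * (m + 1)) =
        (2 * ℓ + 2 * m + 2) * Nat.doubleFactorial (2 * ℓ + 2 * m) := by
      rw [← Nat.doubleFactorial_add_two]; congr 1
    have hne : (Nat.doubleFactorial (2 * ℓ + 2 * m) : ℝ) ≠ 0 := by positivity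
    have hpt (x : ℝ) : Real.cos x ^ (2 * (ℓ + 1)) * Real.sin x ^ (2 * m) =
        Real.cos x ^ (2 * ℓ) * Real.sin x ^ (2 * m) -
          Real.cos x ^ (2 * ℓ) * Real.sin x ^ (2 * (m + 1)) := by
      rw [mul_add, mul_add, pow_add, pow_add, mul_one, Real.cos_sq']
      ring
    simp only [hpt]
    rw [intervalIntegral.integral_sub (Continuous.intervalIntegrable (by fun_prop) _ _)
      (Continuous.intervalIntegrable (by fun_prop) _ _), ih, ih, hodd, hodd, he, he']
    push_cast
    field_simp
    ring

/-- **A trigonometric singular integral**: for `ℓ ≥ 0` and `k ≥ 1`,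
`∫_ℝ cos(s/2)^{2ℓ} sin(s/2)^{2k} s⁻² ds = ((2ℓ−1)!! (2k−3)!!/(2ℓ+2k−2)!!) (π/2)`,
where `(−1)!! = 0!! = 1`. -/
theorem integral_cos_pow_sin_pow (ℓ k : ℕ) (hk : 1 ≤ k) :
    ∫ s : ℝ, (Real.cos (s / 2)) ^ (2 * ℓ) * (Real.sin (s / 2)) ^ (2 * k) / s ^ 2 =
      ((Nat.doubleFactorial (2 * ℓ - 1) : ℝ) * (Nat.doubleFactorial (2 * k - 3))) /
        (Nat.doubleFactorial (2 * ℓ + 2 * k - 2)) * (Real.pi / 2) := by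
  obtain ⟨m, rfl⟩ : ∃ m, k = m + 1 := ⟨k - 1, by omega⟩
  have hpi := Real.pi_pos
  -- For `m = 0` both sides truncate to `0`, and `0‼ = 1 = (-1)‼`.
  have e1 : 2 * (m + 1) - 3 = 2 * m - 1 := by omega
  have e2 : 2 * ℓ + 2 * (m + 1) - 2 = 2 * ℓ + 2 * m := by omega
  let g : ℝ → ℝ := fun x => Real.cos (Real.pi * x) ^ (2 * ℓ) * Real.sin (Real.pi * x) ^ (2 * m)
  have hg : Continuous g := by fun_prop
  have h0 (x : ℝ) : 0 ≤ g x :=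
    mul_nonneg ((even_two_mul _).pow_nonneg _) ((even_two_mul _).pow_nonneg _)
  have hper : Function.Periodic g 1 := fun x => by
    simp only [g]
    rw [mul_add, mul_one, Real.cos_add_pi, Real.sin_add_pi, (even_two_mul _).neg_pow,
      (even_two_mul _).neg_pow]
  have hL := integral_mul_sin_sq_div_sq g hg h0 hper
  have hR : ∫ x in (0 : ℝ)..1, g x = Real.pi⁻¹ *
      ∫ x in (0 : ℝ)..Real.pi, Real.cos x ^ (2 * ℓ) * Real.sin x ^ (2 * m) := by
    simpa using intervalIntegral.integral_comp_mul_left (a := 0) (b := 1)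
      (fun x => Real.cos x ^ (2 * ℓ) * Real.sin x ^ (2 * m)) Real.pi_ne_zero
  have hS := Measure.integral_comp_mul_left
    (fun s : ℝ => Real.cos (s / 2) ^ (2 * ℓ) * Real.sin (s / 2) ^ (2 * (m + 1)) / s ^ 2)
    (2 * Real.pi)
  have hpt (x : ℝ) : Real.cos (2 * Real.pi * x / 2) ^ (2 * ℓ) *
      Real.sin (2 * Real.pi * x / 2) ^ (2 * (m + 1)) / (2 * Real.pi * x) ^ 2 =
      4⁻¹ * (g x * (Real.sin (Real.pi * x) ^ 2 / (Real.pi * x) ^ 2)) := by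
    have h2 : 2 * Real.pi * x / 2 = Real.pi * x := by ring
    rw [h2, mul_assoc 2, mul_pow 2, mul_add, pow_add]
    simp only [g, div_eq_mul_inv, mul_inv]
    ring
  simp only [hpt] at hS
  rw [integral_const_mul, hL, hR, integral_cos_pow_mul_sin_pow, abs_of_pos (by positivity),
    smul_eq_mul] at hS
  rw [e1, e2]
  field_simp at hS ⊢
  linarith
end

section
/- Let a > 0 be real, m ∈ ℕ₀, and u, v ∈ ℂ with Re(u) > 0, Re(v) > 0, and Re(u + v) > m + 1. Then ∫_ℝ s^m (1 − is)^{−u} (1 + ias)^{−v−m} ds = 2π (−i)^m a^{u−1} (a+1)^{1−u−v−m} [Γ(u+v−1)/(Γ(u)Γ(v))] · [(u+v−1)_m/(v)_m] · ₂F₁(−m, 1−u; 2−u−v−m; (a+1)/a), where all complex powers are principal-branch powers. (This is obtained by differentiating Cauchy's beta integral ∫_ℝ (1−is)^{−u}(1+ias)^{−v} ds = 2π [Γ(u+v−1)/(Γ(u)Γ(v))] a^{u−1}(a+1)^{1−u−v} m times with respect to a.) -/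
/-!
Write `J(u, v) = ∫ (1 - is)^{-u} (1 + ias)^{-v} ds`. With `w = 1 - is` one has
`s^m = (-i)^m (1 - w)^m`, so the binomial theorem turns the integral into
`(-i)^m ∑_l (-1)^l (m choose l) J(u - l, v + m)`. Inserting Cauchy's formula for each
`J(u - l, v + m)` gives the hypergeometric polynomial term by term (`hypergeometric_term_eq`), so no
differentiation in `a` is needed.

Here `Re (u - l)` may be negative, hence Cauchy's formula is required for all `u` and `v` with
`Re v > 0` and `Re (u + v) > 1` (`cauchy_beta`). For `Re u > 1` it is Parseval's formula for the
functions `t^{u-1} e^{-t}` and `t^{v-1} e^{-t/a}` on the half-line, whose Fourier transforms are given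
by Euler's integral with a complex scale (`gamma_complex_scale`). The general case follows from the
contiguous relation `a(u+v-1) J(u, v) = (a+1) u J(u+1, v)` (`beta_raise`), which comes from an
integration by parts.
-/

open MeasureTheory

/-- The rising factorial `(a)_n = a(a+1)⋯(a+n−1)` in `ℂ`. -/
noncomputable def pochC (a : ℂ) (n : ℕ) : ℂ := (ascPochhammer ℂ n).eval a

/-- The terminating Gauss hypergeometric polynomial
`₂F₁(−m, b; c; z) = Σ_{ℓ=0}^m (−m)_ℓ (b)_ℓ z^ℓ/((c)_ℓ ℓ!)`. -/
noncomputable def hyp2F1TermC (m : ℕ) (b c z : ℂ) : ℂ :=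
  ∑ l ∈ Finset.range (m + 1),
    pochC (-(m : ℂ)) l * pochC b l * z ^ l / (pochC c l * Nat.factorial l)

namespace CauchyBeta

open Filter Topology Set FourierTransform

/-! ### Decay and contiguity of Cauchy's beta integral -/

lemma line_re_pos (b s : ℝ) : 0 < (1 + Complex.I * b * s : ℂ).re := by simp

lemma line_mem_slitPlane (b s : ℝ) : (1 + Complex.I * b * s : ℂ) ∈ Complex.slitPlane :=
  Or.inl (line_re_pos b s)

lemma line_ne_zero (b s : ℝ) : (1 + Complex.I * b * s : ℂ) ≠ 0 :=
  Complex.slitPlane_ne_zero (line_mem_slitPlane b s)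

lemma continuous_cpow_line (b : ℝ) (w : ℂ) :
    Continuous fun s : ℝ => (1 + Complex.I * b * s : ℂ) ^ w :=
  continuous_iff_continuousAt.2 fun s =>
    ContinuousAt.comp (f := fun s : ℝ => (1 + Complex.I * b * s : ℂ)) (g := fun z : ℂ => z ^ w)
      (continuousAt_cpow_const (line_mem_slitPlane b s)) (by fun_prop)

/-- The principal argument is bounded, so `|(1 + ibs)^{-w}|` is at most a constant times
`|1 + ibs|^{-Re w}`, and `|1 + ibs|` is comparable to `(1 + s²)^{1/2}` as `b ≠ 0`. -/
lemma norm_cpow_line_le (b : ℝ) (hb : b ≠ 0) (w : ℂ) :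
    ∃ C : ℝ, 0 ≤ C ∧ ∀ s : ℝ,
      ‖(1 + Complex.I * b * s : ℂ) ^ (-w)‖ ≤ C * (1 + s ^ 2) ^ (-w.re / 2) := by
  set lo := min 1 (b ^ 2)
  set hi := max 1 (b ^ 2)
  have hb2 : 0 < b ^ 2 := by positivity
  have hlo : 0 < lo := lt_min one_pos hb2
  have hhi : 0 < hi := lt_max_of_lt_left one_pos
  refine ⟨(lo ^ (-w.re / 2) + hi ^ (-w.re / 2)) * Real.exp (Real.pi * |w.im|), by positivity, ?_⟩
  intro s
  have hs : 0 < 1 + s ^ 2 := by positivity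
  set q := (1 + b ^ 2 * s ^ 2) / (1 + s ^ 2) with hq
  have hqlo : lo ≤ q := by
    rw [hq, le_div_iff₀ hs]
    nlinarith [min_le_left 1 (b ^ 2), min_le_right 1 (b ^ 2), sq_nonneg s]
  have hqhi : q ≤ hi := by
    rw [hq, div_le_iff₀ hs]
    nlinarith [le_max_left 1 (b ^ 2), le_max_right 1 (b ^ 2), sq_nonneg s]
  have hq0 : 0 < q := hlo.trans_le hqlo
  have hnorm : ‖(1 + Complex.I * b * s : ℂ)‖ = Real.sqrt (q * (1 + s ^ 2)) := by
    rw [Complex.norm_def, hq, div_mul_cancel₀ _ hs.ne', Complex.normSq_apply]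
    congr 1; simp; ring
  have hqr : q ^ (-w.re / 2) ≤ lo ^ (-w.re / 2) + hi ^ (-w.re / 2) := by
    rcases le_total 0 (-w.re / 2) with h | h
    · exact (Real.rpow_le_rpow hq0.le hqhi h).trans (by linarith [Real.rpow_nonneg hlo.le (-w.re / 2)])
    · exact (Real.rpow_le_rpow_of_nonpos hlo hqlo h).trans
        (by linarith [Real.rpow_nonneg hhi.le (-w.re / 2)])
  have hexp : (Real.exp (Complex.arg (1 + Complex.I * b * s) * (-w).im))⁻¹
      ≤ Real.exp (Real.pi * |w.im|) := by
    rw [← Real.exp_neg, Real.exp_le_exp]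
    calc _ ≤ |Complex.arg (1 + Complex.I * b * s) * w.im| := by
          rw [Complex.neg_im, mul_neg, neg_neg]; exact le_abs_self _
      _ ≤ _ := by rw [abs_mul]; gcongr; exact Complex.abs_arg_le_pi _
  rw [Complex.norm_cpow_of_ne_zero (line_ne_zero b s), hnorm, Real.sqrt_eq_rpow,
    ← Real.rpow_mul (by positivity), div_eq_mul_inv]
  have e : (1 / 2 * (-w).re : ℝ) = -w.re / 2 := by simp; ring
  rw [e, Real.mul_rpow hq0.le hs.le]
  calc q ^ (-w.re / 2) * (1 + s ^ 2) ^ (-w.re / 2) * _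
      ≤ (lo ^ (-w.re / 2) + hi ^ (-w.re / 2)) * (1 + s ^ 2) ^ (-w.re / 2) *
        Real.exp (Real.pi * |w.im|) := by gcongr
    _ = _ := by ring

lemma norm_cpow_mul_cpow_le (a b : ℝ) (ha : a ≠ 0) (hb : b ≠ 0) (u v : ℂ) :
    ∃ C : ℝ, 0 ≤ C ∧ ∀ s : ℝ,
      ‖(1 + Complex.I * b * s : ℂ) ^ (-u) * (1 + Complex.I * a * s : ℂ) ^ (-v)‖ ≤
        C * (1 + ‖s‖ ^ 2) ^ (-(u + v).re / 2) := by
  obtain ⟨C, hC, h1⟩ := norm_cpow_line_le b hb u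
  obtain ⟨D, hD, h2⟩ := norm_cpow_line_le a ha v
  refine ⟨C * D, by positivity, fun s => ?_⟩
  have hs : 0 < 1 + s ^ 2 := by positivity
  rw [norm_mul, Real.norm_eq_abs, sq_abs]
  calc _ ≤ C * (1 + s ^ 2) ^ (-u.re / 2) * (D * (1 + s ^ 2) ^ (-v.re / 2)) := by
        gcongr
        exacts [h1 s, h2 s]
    _ = C * D * ((1 + s ^ 2) ^ (-u.re / 2) * (1 + s ^ 2) ^ (-v.re / 2)) := by ring
    _ = _ := by
      rw [← Real.rpow_add hs]; congr 2; simp; ring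

lemma integrable_cpow_mul_cpow (a b : ℝ) (ha : a ≠ 0) (hb : b ≠ 0) (u v : ℂ) (huv : 1 < (u + v).re) :
    Integrable fun s : ℝ =>
      (1 + Complex.I * b * s : ℂ) ^ (-u) * (1 + Complex.I * a * s : ℂ) ^ (-v) := by
  obtain ⟨C, hC, h⟩ := norm_cpow_mul_cpow_le a b ha hb u v
  refine ((integrable_rpow_neg_one_add_norm_sq (E := ℝ) (μ := volume) (r := (u + v).re)
    (by simpa using huv)).const_mul C).mono'
    ((continuous_cpow_line b _).mul (continuous_cpow_line a _)).aestronglyMeasurable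
    (Eventually.of_forall h)

lemma tendsto_cpow_mul_cpow (a b : ℝ) (ha : a ≠ 0) (hb : b ≠ 0) (u v : ℂ) (huv : 0 < (u + v).re)
    {l : Filter ℝ} (hl : Tendsto (fun s : ℝ => ‖s‖) l atTop) :
    Tendsto (fun s : ℝ =>
      (1 + Complex.I * b * s : ℂ) ^ (-u) * (1 + Complex.I * a * s : ℂ) ^ (-v)) l (𝓝 0) := by
  obtain ⟨C, hC, h⟩ := norm_cpow_mul_cpow_le a b ha hb u v
  refine squeeze_zero_norm h ?_
  have h1 : Tendsto (fun s : ℝ => 1 + ‖s‖ ^ 2) l atTop :=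
    tendsto_atTop_add_const_left _ _ ((tendsto_pow_atTop two_ne_zero).comp hl)
  have h2 := (tendsto_rpow_neg_atTop (y := (u + v).re / 2) (by positivity)).comp h1
  have h3 := h2.const_mul C
  rw [mul_zero] at h3
  simpa only [neg_div, Function.comp_def] using h3

lemma hasDerivAt_cpow_line (b : ℝ) (w : ℂ) (s : ℝ) :
    HasDerivAt (fun s : ℝ => (1 + Complex.I * b * s : ℂ) ^ (-w))
      (-w * (1 + Complex.I * b * s : ℂ) ^ (-(w + 1)) * (Complex.I * b)) s := by
  have h1 : HasDerivAt (fun z : ℂ => 1 + Complex.I * b * z) (Complex.I * b) s := by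
    simpa using ((hasDerivAt_id (s : ℂ)).const_mul (Complex.I * b)).const_add 1
  have h2 := (h1.cpow_const (c := -w) (line_mem_slitPlane b s)).comp_ofReal
  convert h2 using 1
  ring_nf

/-- The total derivative of `(1 + ibs)^{-u} (1 + ias)^{-v}` integrates to zero, since this
function tends to `0` at both ends. -/
lemma beta_parts (a b : ℝ) (ha : a ≠ 0) (hb : b ≠ 0) (u v : ℂ) (huv : 0 < (u + v).re) :
    u * b * ∫ s : ℝ, (1 + Complex.I * b * s : ℂ) ^ (-(u + 1)) *
        (1 + Complex.I * a * s : ℂ) ^ (-v) =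
      -(v * a * ∫ s : ℝ, (1 + Complex.I * b * s : ℂ) ^ (-u) *
        (1 + Complex.I * a * s : ℂ) ^ (-(v + 1))) := by
  have i1 := (integrable_cpow_mul_cpow a b ha hb (u + 1) v (by simp at huv ⊢; linarith)).const_mul
    (-(u * b) * Complex.I)
  have i2 := (integrable_cpow_mul_cpow a b ha hb u (v + 1) (by simp at huv ⊢; linarith)).const_mul
    (-(v * a) * Complex.I)
  have h := integral_of_hasDerivAt_of_tendsto
    (fun s => (hasDerivAt_cpow_line b u s).mul (hasDerivAt_cpow_line a v s))
    ((i1.add i2).congr (Eventually.of_forall fun s => by simp only [Pi.add_apply]; ring))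
    (tendsto_cpow_mul_cpow a b ha hb u v huv tendsto_abs_atBot_atTop)
    (tendsto_cpow_mul_cpow a b ha hb u v huv tendsto_abs_atTop_atTop)
  have h' := integral_add i1 i2
  rw [integral_const_mul, integral_const_mul] at h'
  rw [integral_congr_ae (g := fun s : ℝ => (-(u * b) * Complex.I) * ((1 + Complex.I * b * s : ℂ) ^ (-(u + 1)) *
        (1 + Complex.I * a * s : ℂ) ^ (-v)) + (-(v * a) * Complex.I) * ((1 + Complex.I * b * s : ℂ) ^ (-u) *
        (1 + Complex.I * a * s : ℂ) ^ (-(v + 1)))) (Eventually.of_forall fun s => by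
          ring), h'] at h
  apply mul_left_cancel₀ Complex.I_ne_zero
  linear_combination -h

lemma cpow_line_succ (b : ℝ) (w : ℂ) (s : ℝ) :
    (1 + Complex.I * b * s : ℂ) ^ (-w) =
      (1 + Complex.I * b * s) * (1 + Complex.I * b * s : ℂ) ^ (-(w + 1)) := by
  have := Complex.cpow_add (-(w + 1)) 1 (line_ne_zero b s)
  rw [Complex.cpow_one] at this
  rw [mul_comm (1 + Complex.I * b * s : ℂ), ← this]; congr 1; ring

/-- Contiguous relation `a(u+v−1) J(u, v) = (a+1) u J(u+1, v)` for Cauchy's beta integral `J`.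
It combines `beta_parts` with `a(1 − is) + (1 + ias) = a + 1`, and needs no positivity of `Re u`. -/
lemma beta_raise (a : ℝ) (ha : 0 < a) (u v : ℂ) (huv : 1 < (u + v).re) :
    a * (u + v - 1) * ∫ s : ℝ, (1 + Complex.I * (-1 : ℝ) * s : ℂ) ^ (-u) *
        (1 + Complex.I * a * s : ℂ) ^ (-v) =
    (a + 1) * u * ∫ s : ℝ, (1 + Complex.I * (-1 : ℝ) * s : ℂ) ^ (-(u + 1)) *
        (1 + Complex.I * a * s : ℂ) ^ (-v) := by
  have hp := beta_parts a (-1) ha.ne' (by norm_num) u (v - 1) (by simp at huv ⊢; linarith)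
  rw [sub_add_cancel] at hp
  have i1 := (integrable_cpow_mul_cpow a (-1) ha.ne' (by norm_num) u v huv).const_mul (a : ℂ)
  have i2 := integrable_cpow_mul_cpow a (-1) ha.ne' (by norm_num) (u + 1) (v - 1)
    (by simp at huv ⊢; linarith)
  have h' := integral_add i1 i2
  rw [integral_const_mul] at h'
  have h3 : ∫ s : ℝ, ((a : ℂ) + 1) * ((1 + Complex.I * (-1 : ℝ) * s : ℂ) ^ (-(u + 1)) *
        (1 + Complex.I * a * s : ℂ) ^ (-v)) = _ := Eq.trans (by
      refine integral_congr_ae (Eventually.of_forall fun s => ?_)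
      simp only
      rw [cpow_line_succ (-1) u s, cpow_line_succ a (v - 1) s, sub_add_cancel]
      push_cast
      ring) h'
  rw [integral_const_mul] at h3
  push_cast at *
  linear_combination (-u) * h3 + hp

/-! ### Euler's integral with a complex scale -/

lemma norm_gammaIntegrand (u z : ℂ) {t : ℝ} (ht : 0 < t) :
    ‖(t : ℂ) ^ u * Complex.exp (-(z * t))‖ = t ^ u.re * Real.exp (-(z.re * t)) := by
  rw [norm_mul, Complex.norm_cpow_eq_rpow_re_of_pos ht, Complex.norm_exp]
  simp

lemma integrableOn_rpow_mul_exp (p c : ℝ) (hp : -1 < p) (hc : 0 < c) :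
    IntegrableOn (fun t : ℝ => t ^ p * Real.exp (-(c * t))) (Ioi 0) := by
  simpa using integrableOn_rpow_mul_exp_neg_mul_rpow (p := 1) hp one_pos hc

lemma aestronglyMeasurable_gammaIntegrand (u z : ℂ) :
    AEStronglyMeasurable (fun t : ℝ => (t : ℂ) ^ u * Complex.exp (-(z * t)))
      (volume.restrict (Ioi 0)) := by
  refine ContinuousOn.aestronglyMeasurable (fun t ht => ?_) measurableSet_Ioi
  refine ContinuousAt.continuousWithinAt ?_
  exact (Complex.continuousAt_ofReal_cpow_const t u (Or.inr (ne_of_gt ht))).mul (by fun_prop)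

lemma integrableOn_gammaIntegrand (u z : ℂ) (hu : -1 < u.re) (hz : 0 < z.re) :
    IntegrableOn (fun t : ℝ => (t : ℂ) ^ u * Complex.exp (-(z * t))) (Ioi 0) := by
  refine (integrableOn_rpow_mul_exp u.re z.re hu hz).mono' (aestronglyMeasurable_gammaIntegrand u z) ?_
  filter_upwards [ae_restrict_mem measurableSet_Ioi] with t ht
  exact (norm_gammaIntegrand u z ht).le

lemma gamma_parts (u z : ℂ) (hu : 0 < u.re) (hz : 0 < z.re) :
    z * ∫ t in Ioi (0 : ℝ), (t : ℂ) ^ u * Complex.exp (-(z * t)) =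
      u * ∫ t in Ioi (0 : ℝ), (t : ℂ) ^ (u - 1) * Complex.exp (-(z * t)) := by
  have hu0 : u ≠ 0 := fun h => by simp [h] at hu
  have i1 := (integrableOn_gammaIntegrand (u - 1) z (by simp; linarith) hz).const_mul u
  have i2 := (integrableOn_gammaIntegrand u z (by linarith) hz).const_mul z
  have h := integral_Ioi_of_hasDerivAt_of_tendsto (a := (0 : ℝ)) (m := (0 : ℂ))
    (f := fun t : ℝ => (t : ℂ) ^ u * Complex.exp (-(z * t)))
    (f' := fun t : ℝ => u * ((t : ℂ) ^ (u - 1) * Complex.exp (-(z * t))) -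
      z * ((t : ℂ) ^ u * Complex.exp (-(z * t)))) ?_ ?_ (i1.sub i2) ?_
  · rw [integral_sub i1 i2, integral_const_mul, integral_const_mul] at h
    simp only [Complex.ofReal_zero, Complex.zero_cpow hu0, zero_mul, sub_zero] at h
    linear_combination -h
  · exact ((Complex.continuousAt_ofReal_cpow_const 0 u (Or.inl hu)).mul
      (by fun_prop)).continuousWithinAt
  · intro t ht
    have h1 : HasDerivAt (fun t : ℝ => (t : ℂ) ^ u) (u * (t : ℂ) ^ (u - 1)) t :=
      hasDerivAt_ofReal_cpow_const (ne_of_gt ht) hu0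
    have h2 : HasDerivAt (fun t : ℝ => Complex.exp (-(z * t)))
        (Complex.exp (-(z * t)) * (-(z * 1))) t :=
      (((hasDerivAt_id (t : ℂ)).const_mul z).neg.cexp).comp_ofReal
    refine (h1.mul h2).congr_deriv ?_
    ring
  · rw [tendsto_zero_iff_norm_tendsto_zero]
    refine (tendsto_rpow_mul_exp_neg_mul_atTop_nhds_zero u.re z.re hz).congr' ?_
    filter_upwards [eventually_gt_atTop 0] with t ht
    rw [norm_gammaIntegrand u z ht, neg_mul]

/-- Differentiation in the scale `z`, dominated on the ball of radius `Re z / 2`, where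
`Re w ≥ Re z / 2`. -/
lemma gamma_hasDerivAt (u z : ℂ) (hu : 0 < u.re) (hz : 0 < z.re) :
    HasDerivAt (fun z : ℂ => ∫ t in Ioi (0 : ℝ), (t : ℂ) ^ (u - 1) * Complex.exp (-(z * t)))
      (-∫ t in Ioi (0 : ℝ), (t : ℂ) ^ u * Complex.exp (-(z * t))) z := by
  rw [← integral_neg]
  refine (hasDerivAt_integral_of_dominated_loc_of_deriv_le
    (bound := fun t : ℝ => t ^ u.re * Real.exp (-(z.re / 2 * t)))
    (s := Metric.ball z (z.re / 2))
    (F' := fun z (t : ℝ) => -((t : ℂ) ^ u * Complex.exp (-(z * t))))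
    (Metric.ball_mem_nhds _ (by positivity)) (Eventually.of_forall fun w =>
      aestronglyMeasurable_gammaIntegrand (u - 1) w)
    (integrableOn_gammaIntegrand (u - 1) z (by simp; linarith) hz)
    (aestronglyMeasurable_gammaIntegrand u z).neg ?_ (integrableOn_rpow_mul_exp _ _ (by linarith) (by positivity)) ?_).2
  · filter_upwards [ae_restrict_mem measurableSet_Ioi] with t ht w hw
    have ht : 0 < t := ht
    have hw' : z.re / 2 ≤ w.re := by
      have h1 := (Complex.abs_re_le_norm (w - z)).trans_lt (by simpa [dist_eq_norm] using hw)
      rw [Complex.sub_re, abs_lt] at h1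
      linarith [h1.1]
    rw [norm_neg, norm_gammaIntegrand u w ht]
    gcongr
  · filter_upwards [ae_restrict_mem measurableSet_Ioi] with t ht w hw
    have ht0 : (t : ℂ) ≠ 0 := by exact_mod_cast (ne_of_gt ht)
    have h2 : HasDerivAt (fun w : ℂ => Complex.exp (-(w * t)))
        (Complex.exp (-(w * t)) * (-(1 * t))) w :=
      (((hasDerivAt_id w).mul_const (t : ℂ)).neg.cexp)
    refine (h2.const_mul ((t : ℂ) ^ (u - 1))).congr_deriv ?_
    rw [Complex.cpow_sub _ _ ht0, Complex.cpow_one]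
    field_simp

/-- Euler's integral with a complex scale `z`: the function `z ↦ z^u ∫ t^{u-1} e^{-zt} dt` has zero
derivative on the right half-plane, so it equals its value `Γ(u)` at `z = 1`. -/
lemma gamma_complex_scale (u z : ℂ) (hu : 0 < u.re) (hz : 0 < z.re) :
    ∫ t in Ioi (0 : ℝ), (t : ℂ) ^ (u - 1) * Complex.exp (-(z * t)) =
      z ^ (-u) * Complex.Gamma u := by
  set A : ℂ → ℂ := fun z => ∫ t in Ioi (0 : ℝ), (t : ℂ) ^ (u - 1) * Complex.exp (-(z * t))
  have hd : ∀ w ∈ {w : ℂ | 0 < w.re}, HasDerivAt (fun w => A w * w ^ u) 0 w := by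
    intro w hw
    have hw0 : w ≠ 0 := fun h => by simp [h] at hw
    have h1 := (gamma_hasDerivAt u w hu hw).mul
      ((hasDerivAt_id w).cpow_const (c := u) (Or.inl hw))
    refine h1.congr_deriv ?_
    change (-∫ t in Ioi (0 : ℝ), (t : ℂ) ^ u * Complex.exp (-(w * t))) * w ^ u +
      A w * (u * w ^ (u - 1) * 1) = 0
    have hp : w * _ = u * A w := gamma_parts u w hu hw
    rw [Complex.cpow_sub _ _ hw0, Complex.cpow_one]
   
    field_simp
    linear_combination (-w ^ u) * hp
  have hc := (isOpen_lt continuous_const Complex.continuous_re).is_const_of_deriv_eq_zero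
    (convex_halfSpace_re_gt 0).isPreconnected
    (fun w hw => (hd w hw).differentiableAt.differentiableWithinAt)
    (fun w hw => (hd w hw).deriv) (x := z) (y := 1) hz (by simp)
  have h1 : A 1 = Complex.Gamma u := by
    rw [Complex.Gamma_eq_integral hu, Complex.GammaIntegral]
    refine integral_congr_ae (Eventually.of_forall fun t => ?_)
    simp [mul_comm]
  have hz0 : z ≠ 0 := fun h => by simp [h] at hz
  have hzu : z ^ u ≠ 0 := by simp [Complex.cpow_eq_zero_iff, hz0]
  simp only [Complex.one_cpow, mul_one, h1] at hc
  rw [Complex.cpow_neg, ← hc]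
  change A z = _
  field_simp

/-! ### Cauchy's beta integral -/

/-- The gamma density without normalisation, `t^{u-1} e^{-ct}` on `(0, ∞)` and `0` elsewhere,
with complex shape `u` and real rate `c`. -/
noncomputable def gammaKernel (u : ℂ) (c : ℝ) : ℝ → ℂ :=
  (Ioi (0 : ℝ)).indicator fun t => (t : ℂ) ^ (u - 1) * Complex.exp (-(c * t))

lemma integrable_gammaKernel (u : ℂ) (c : ℝ) (hu : 0 < u.re) (hc : 0 < c) : Integrable (gammaKernel u c) :=
  (integrableOn_gammaIntegrand (u - 1) c (by simp; linarith) (by simpa using hc)).integrable_indicator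
    measurableSet_Ioi

lemma fourier_gammaKernel (u : ℂ) (c : ℝ) (hu : 0 < u.re) (hc : 0 < c) (ξ : ℝ) :
    𝓕 (gammaKernel u c) ξ = (c + Complex.I * (2 * Real.pi * ξ)) ^ (-u) * Complex.Gamma u := by
  rw [← gamma_complex_scale u _ hu (by simpa using hc), Real.fourier_real_eq_integral_exp_smul,
    ← integral_indicator measurableSet_Ioi]
  refine integral_congr_ae (Eventually.of_forall fun t => ?_)
  by_cases ht : t ∈ Ioi (0 : ℝ)
  · simp only [gammaKernel, indicator_of_mem ht, smul_eq_mul]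
    rw [mul_left_comm, ← Complex.exp_add]
    congr 2
    push_cast
    ring
  · simp only [gammaKernel, indicator_of_notMem ht, smul_zero]

lemma continuousAt_gammaKernel (u : ℂ) (c : ℝ) {t : ℝ} (ht : 0 < t) : ContinuousAt (gammaKernel u c) t := by
  have h : ContinuousAt (fun t : ℝ => (t : ℂ) ^ (u - 1) * Complex.exp (-(c * t))) t :=
    (Complex.continuousAt_ofReal_cpow_const t _ (Or.inr (ne_of_gt ht))).mul (by fun_prop)
  refine h.congr ?_
  filter_upwards [Ioi_mem_nhds ht] with x hx
  simp only [gammaKernel, indicator_of_mem hx]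

/-- The Fourier transform is symmetric for the bilinear pairing. -/
lemma fourier_flip {f g : ℝ → ℂ} (hf : Integrable f) (hg : Integrable g) :
    ∫ ξ, 𝓕 f ξ * g ξ = ∫ x, f x * 𝓕 g x := by
  simpa using! (VectorFourier.integral_fourierIntegral_smul_eq_flip (L := innerₗ ℝ)
    Real.continuous_fourierChar continuous_inner hf hg)

lemma inv_add_cpow (a : ℝ) (ha : 0 < a) (s : ℝ) (w : ℂ) :
    ((a⁻¹ : ℝ) + Complex.I * s : ℂ) ^ w = (a : ℂ) ^ (-w) * (1 + Complex.I * a * s) ^ w := by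
  have h : ((a⁻¹ : ℝ) + Complex.I * s : ℂ) = (a⁻¹ : ℝ) * (1 + Complex.I * a * s) := by
    have : (a : ℂ) ≠ 0 := by exact_mod_cast ha.ne'
    push_cast; field_simp
  have ha' : (a : ℂ) ≠ 0 := by exact_mod_cast ha.ne'
  have hai : ((a⁻¹ : ℝ) : ℂ) ≠ 0 := by exact_mod_cast (inv_pos.2 ha).ne'
  rw [h, Complex.cpow_def_of_ne_zero (mul_ne_zero hai (line_ne_zero a s)),
    Complex.log_ofReal_mul (inv_pos.2 ha) (line_ne_zero a s), add_mul, Complex.exp_add,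
    ← Complex.cpow_def_of_ne_zero (line_ne_zero a s), Complex.cpow_def_of_ne_zero ha', Real.log_inv,
    ← Complex.ofReal_log ha.le]
  congr 2
  push_cast; ring

/-- Cauchy's beta integral when `Re u > 1`, by Parseval's formula for two gamma kernels. The extra
assumption makes the Fourier transform of the first kernel integrable, so that Fourier inversion
applies to it. -/
lemma cauchy_beta_of_one_lt_re (a : ℝ) (ha : 0 < a) (u v : ℂ) (hu : 1 < u.re) (hv : 0 < v.re) :
    ∫ s : ℝ, (1 + Complex.I * (-1 : ℝ) * s : ℂ) ^ (-u) * (1 + Complex.I * a * s : ℂ) ^ (-v) =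
      2 * Real.pi * (Complex.Gamma (u + v - 1) * ((Complex.Gamma u)⁻¹ * (Complex.Gamma v)⁻¹)) *
        ((a : ℂ) ^ (u - 1) * ((a : ℂ) + 1) ^ (1 - u - v)) := by
  have hu0 : 0 < u.re := by linarith
  have ha' : (a : ℂ) ≠ 0 := by exact_mod_cast ha.ne'
  have hpi : (Real.pi : ℂ) ≠ 0 := by exact_mod_cast Real.pi_ne_zero
  have hΓu := Complex.Gamma_ne_zero_of_re_pos hu0
  have hΓv := Complex.Gamma_ne_zero_of_re_pos hv
  have hpi2 : (2 * Real.pi) ≠ 0 := by positivity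
  set f := gammaKernel u 1
  set g := gammaKernel v a⁻¹
  have hf : Integrable f := integrable_gammaKernel u 1 hu0 one_pos
  have hg : Integrable g := integrable_gammaKernel v _ hv (inv_pos.2 ha)
  have hFf : ∀ ξ, 𝓕 f (-ξ) = (1 + Complex.I * (-1 : ℝ) * (2 * Real.pi * ξ : ℝ)) ^ (-u) *
      Complex.Gamma u := by
    intro ξ
    rw [fourier_gammaKernel u 1 hu0 one_pos]
    push_cast
    congr 3; ring
  have hFg : ∀ ξ, 𝓕 g ξ = (a : ℂ) ^ v * (1 + Complex.I * a * (2 * Real.pi * ξ : ℝ)) ^ (-v) *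
      Complex.Gamma v := by
    intro ξ
    have := inv_add_cpow a ha (2 * Real.pi * ξ) (-v)
    rw [neg_neg] at this
    rw [fourier_gammaKernel v _ hv (inv_pos.2 ha), ← this]
    push_cast
    rfl
  have hφ : Integrable fun ξ => 𝓕 f (-ξ) := by
    have h1 := (integrable_cpow_mul_cpow 1 (-1) one_ne_zero (by norm_num) u 0 (by simpa using hu))
    simp only [neg_zero, Complex.cpow_zero, mul_one] at h1
    refine ((h1.comp_mul_left' hpi2).mul_const (Complex.Gamma u)).congr
      (Eventually.of_forall fun ξ => (hFf ξ).symm)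
  have hFfi : Integrable (𝓕 f) := by simpa using hφ.comp_neg
  have hinv : ∀ x, 0 < x → 𝓕 (fun ξ => 𝓕 f (-ξ)) x = f x := by
    intro x hx
    rw [← Real.fourierInv_eq_fourier_comp_neg]
    exact hf.fourierInv_fourier_eq hFfi (continuousAt_gammaKernel u 1 hx)
  have hflip := fourier_flip hφ hg
  -- the variable `s = 2πξ` turns the pairing of the transforms into the beta integral
  have hR : ∫ ξ, 𝓕 f (-ξ) * 𝓕 g ξ = (a : ℂ) ^ v * Complex.Gamma u * Complex.Gamma v *
      ((2 * Real.pi : ℝ)⁻¹ * ∫ s : ℝ, (1 + Complex.I * (-1 : ℝ) * s : ℂ) ^ (-u) *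
        (1 + Complex.I * a * s : ℂ) ^ (-v)) := by
    have h1 := Measure.integral_comp_mul_left (fun s : ℝ =>
      (1 + Complex.I * (-1 : ℝ) * s : ℂ) ^ (-u) * (1 + Complex.I * a * s : ℂ) ^ (-v)) (2 * Real.pi)
    rw [abs_of_pos (by positivity), Complex.real_smul] at h1
    push_cast at h1 ⊢
    rw [← h1, ← integral_const_mul]
    refine integral_congr_ae (Eventually.of_forall fun ξ => ?_)
    simp only [hFf, hFg]
    push_cast
    ring
  -- only `x > 0` matters, as `g` vanishes elsewhere; the product of the kernels is again one
  have hL : ∫ x, 𝓕 (fun ξ => 𝓕 f (-ξ)) x * g x =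
      ((1 + a⁻¹ : ℝ) : ℂ) ^ (-(u + v - 1)) * Complex.Gamma (u + v - 1) := by
    rw [← gamma_complex_scale (u + v - 1) _ (by simp; linarith)
      (by simp only [Complex.ofReal_re]; positivity), ← integral_indicator measurableSet_Ioi]
    refine integral_congr_ae (Eventually.of_forall fun t => ?_)
    by_cases ht : t ∈ Ioi (0 : ℝ)
    · have ht0 : (t : ℂ) ≠ 0 := by exact_mod_cast (ne_of_gt ht)
      simp only [hinv t ht]
      simp only [f, g, gammaKernel, indicator_of_mem ht]
      rw [mul_mul_mul_comm, ← Complex.cpow_add _ _ ht0, ← Complex.exp_add]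
      congr 2
      · ring
      · push_cast; ring
    · simp only [g, gammaKernel, indicator_of_notMem ht, mul_zero]
  rw [hL, hR] at hflip
  have hpow : ((1 + a⁻¹ : ℝ) : ℂ) ^ (-(u + v - 1)) =
      (a : ℂ) ^ v * ((a : ℂ) ^ (u - 1) * ((a : ℂ) + 1) ^ (1 - u - v)) := by
    have e1 : (1 + a⁻¹ : ℝ) = (a + 1) * a⁻¹ := by field_simp
    rw [e1, Complex.ofReal_mul, Complex.mul_cpow_ofReal_nonneg (by positivity) (by positivity),
      Complex.ofReal_inv, Complex.inv_cpow _ _ (by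
        rw [Complex.arg_ofReal_of_nonneg ha.le]; exact Real.pi_ne_zero.symm),
      ← Complex.cpow_neg, neg_neg]
    have e2 : u + v - 1 = v + (u - 1) := by ring
    have e3 : -(u + v - 1) = 1 - u - v := by ring
    rw [e3, e2, Complex.cpow_add _ _ ha']
    push_cast
    ring
  rw [hpow] at hflip
  have hav : (a : ℂ) ^ v ≠ 0 := by simp [Complex.cpow_eq_zero_iff, ha']
  push_cast at hflip ⊢
  field_simp at hflip ⊢
  linear_combination -hflip

/-- Cauchy's beta integral, for every `u` with `Re (u + v) > 1`, by descending induction along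
`beta_raise`. If `u` is a nonpositive integer, Mathlib's value `Γ(u) = 0` gives `(Γ u)⁻¹ = 0`, which
is the value of the entire function `1/Γ` there, so the formula remains correct. -/
lemma cauchy_beta (a : ℝ) (ha : 0 < a) (n : ℕ) : ∀ (u v : ℂ), 1 < u.re + n →
    0 < v.re → 1 < (u + v).re →
    ∫ s : ℝ, (1 + Complex.I * (-1 : ℝ) * s : ℂ) ^ (-u) * (1 + Complex.I * a * s : ℂ) ^ (-v) =
      2 * Real.pi * (Complex.Gamma (u + v - 1) * ((Complex.Gamma u)⁻¹ * (Complex.Gamma v)⁻¹)) *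
        ((a : ℂ) ^ (u - 1) * ((a : ℂ) + 1) ^ (1 - u - v)) := by
  have ha' : (a : ℂ) ≠ 0 := by exact_mod_cast ha.ne'
  have ha1 : (a : ℂ) + 1 ≠ 0 := by exact_mod_cast (by positivity : a + 1 ≠ 0)
  induction n with
  | zero => intro u v hu hv _; exact cauchy_beta_of_one_lt_re a ha u v (by simpa using hu) hv
  | succ n ih =>
    intro u v hu hv huv
    have h := beta_raise a ha u v huv
    rw [ih (u + 1) v (by push_cast at hu; simp; linarith) hv (by simp at huv ⊢; linarith)] at h
    have huv1 : u + v - 1 ≠ 0 := fun h0 => by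
      have := congrArg Complex.re h0
      simp at this huv; linarith
    have e1 : u + 1 + v - 1 = (u + v - 1) + 1 := by ring
    have e2 : u + 1 - 1 = (u - 1) + 1 := by ring
    have e3 : 1 - u - v = (1 - (u + 1) - v) + 1 := by ring
    rw [e1, e2, Complex.Gamma_add_one _ huv1, Complex.cpow_add _ _ ha', Complex.cpow_one] at h
    rw [e3, Complex.cpow_add _ _ ha1, Complex.cpow_one,
      Complex.one_div_Gamma_eq_self_mul_one_div_Gamma_add_one u]
    apply mul_left_cancel₀ (mul_ne_zero ha' huv1)
    rw [h]
    ring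

/-! ### The hypergeometric sum -/

lemma pochC_zero (x : ℂ) : pochC x 0 = 1 := by simp [pochC]

lemma pochC_succ (x : ℂ) (n : ℕ) : pochC x (n + 1) = pochC x n * (x + n) := by
  simp [pochC, ascPochhammer_succ_eval]

/-- Holds at the poles of `Γ` too, where `(Γ w)⁻¹ = 0` is the value of the entire function `1/Γ`. -/
lemma inv_Gamma_sub_nat (w : ℂ) (l : ℕ) :
    (Complex.Gamma (w - l))⁻¹ = (-1) ^ l * pochC (1 - w) l * (Complex.Gamma w)⁻¹ := by
  induction l with
  | zero => simp [pochC_zero]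
  | succ l ih =>
    rw [Complex.one_div_Gamma_eq_self_mul_one_div_Gamma_add_one, pochC_succ]
    have : w - (l + 1 : ℕ) + 1 = w - l := by push_cast; ring
    rw [this, ih]
    push_cast
    ring

lemma pochC_neg_nat (m l : ℕ) (hl : l ≤ m) :
    pochC (-(m : ℂ)) l = (-1) ^ l * m.choose l * l.factorial := by
  induction l with
  | zero => simp [pochC_zero]
  | succ l ih =>
    have h : (m.choose (l + 1) : ℂ) * (l + 1) = m.choose l * (m - l) := by
      have := congrArg (Nat.cast (R := ℂ)) (Nat.choose_succ_right_eq m l)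
      push_cast [Nat.cast_sub (Nat.le_of_succ_le hl)] at this
      exact this
    rw [pochC_succ, ih (Nat.le_of_succ_le hl), Nat.factorial_succ]
    push_cast
    linear_combination (-1) ^ l * (l.factorial : ℂ) * h

lemma Gamma_add_nat_eq (v : ℂ) (hv : 0 < v.re) (m : ℕ) :
    Complex.Gamma (v + m) = pochC v m * Complex.Gamma v := by
  rw [pochC, ← Complex.Gamma_add_nat_div_Gamma_eq v, div_mul_cancel₀]
  · exact Complex.Gamma_ne_zero_of_re_pos hv
  · intro k hk
    have : v.re = -k := by simp [hk]
    have : (0 : ℝ) ≤ k := Nat.cast_nonneg k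
    linarith

/-- Expansion of `s^m = (-i)^m (1 - w)^m` in powers of `w = 1 - is`. -/
lemma integrand_expand (a : ℝ) (m : ℕ) (u v : ℂ) (s : ℝ) :
    (s : ℂ) ^ m * (1 - Complex.I * s) ^ (-u) * (1 + Complex.I * a * s) ^ (-v - m) =
      ∑ l ∈ Finset.range (m + 1), (-Complex.I) ^ m * ((-1) ^ l * m.choose l) *
        ((1 + Complex.I * (-1 : ℝ) * s : ℂ) ^ (-(u - l)) *
          (1 + Complex.I * a * s : ℂ) ^ (-(v + m))) := by
  set w : ℂ := 1 + Complex.I * (-1 : ℝ) * s with hw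
  have hw0 : w ≠ 0 := line_ne_zero (-1) s
  have e1 : (1 - Complex.I * s : ℂ) = w := by rw [hw]; push_cast; ring
  have e2 : (s : ℂ) = -Complex.I * (-w + 1) := by
    rw [hw]; push_cast
    linear_combination (s : ℂ) * Complex.I_mul_I
  have e3 : (-v - m : ℂ) = -(v + m) := by ring
  rw [e1, e3]
  have e5 : (s : ℂ) ^ m = (-Complex.I) ^ m * (-w + 1) ^ m := by
    rw [← mul_pow, ← e2]
  rw [e5, add_pow]
  rw [Finset.mul_sum, Finset.sum_mul, Finset.sum_mul]
  refine Finset.sum_congr rfl fun l _ => ?_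
  have e4 : -(u - l) = -u + l := by ring
  rw [e4, Complex.cpow_add _ _ hw0, Complex.cpow_natCast, neg_pow w, one_pow]
  ring

/-- The contribution of `w^l` in the expansion of `s^m` is the `l`-th hypergeometric term. The
denominator `(2-u-v-m)_l` comes from `Γ(u+v-1+m-l)` by `inv_Gamma_sub_nat`. -/
lemma hypergeometric_term_eq (a : ℝ) (ha : 0 < a) (m : ℕ) (u v : ℂ)
    (hu : 0 < u.re) (hv : 0 < v.re) (huv : 1 < (u + v).re) (l : ℕ) (hl : l ≤ m) :
    ((-1) ^ l * m.choose l) *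
      (2 * Real.pi * (Complex.Gamma (u - l + (v + m) - 1) *
        ((Complex.Gamma (u - l))⁻¹ * (Complex.Gamma (v + m))⁻¹)) *
        ((a : ℂ) ^ (u - l - 1) * ((a : ℂ) + 1) ^ (1 - (u - l) - (v + m)))) =
    2 * Real.pi * (a : ℂ) ^ (u - 1) *
        ((a : ℂ) + 1) ^ (1 - u - v - m) *
        (Complex.Gamma (u + v - 1) / (Complex.Gamma u * Complex.Gamma v)) *
        (pochC (u + v - 1) m / pochC v m) *
      (pochC (-(m : ℂ)) l * pochC (1 - u) l * (((a : ℂ) + 1) / a) ^ l /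
        (pochC (2 - u - v - m) l * Nat.factorial l)) := by
  have ha' : (a : ℂ) ≠ 0 := by exact_mod_cast ha.ne'
  have ha1 : (a : ℂ) + 1 ≠ 0 := by exact_mod_cast (by positivity : a + 1 ≠ 0)
  have hp : 0 < (u + v - 1).re := by simp at huv ⊢; linarith
  have hlm : (l : ℝ) ≤ m := by exact_mod_cast hl
  have hΓp := Complex.Gamma_ne_zero_of_re_pos hp
  have hΓpm : Complex.Gamma (u + v - 1 + m) ≠ 0 :=
    Complex.Gamma_ne_zero_of_re_pos (by rw [Complex.add_re, Complex.natCast_re]; positivity)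
  have hΓpml : Complex.Gamma (u + v - 1 + m - l) ≠ 0 :=
    Complex.Gamma_ne_zero_of_re_pos (by
      rw [Complex.sub_re, Complex.add_re, Complex.natCast_re, Complex.natCast_re]; linarith)
  have hG := inv_Gamma_sub_nat (u + v - 1 + m) l
  have ec : 1 - (u + v - 1 + m) = 2 - u - v - m := by ring
  rw [ec, Gamma_add_nat_eq _ hp] at hG
  have hq : pochC (2 - u - v - m) l ≠ 0 := fun h0 => by
    rw [h0] at hG; simp [hΓpml] at hG
  have hpm : pochC (u + v - 1) m ≠ 0 := fun h0 => hΓpm (by rw [Gamma_add_nat_eq _ hp, h0, zero_mul])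
  have hG' : Complex.Gamma (u - l + (v + m) - 1) =
      (-1) ^ l * pochC (u + v - 1) m * Complex.Gamma (u + v - 1) / pochC (2 - u - v - m) l := by
    have e : u - l + (v + m) - 1 = u + v - 1 + m - l := by ring
    have hsq : ((-1 : ℂ) ^ l) * (-1) ^ l = 1 := by rw [← mul_pow]; simp
    rw [e, ← inv_inv (Complex.Gamma (u + v - 1 + m - l)), hG]
    rw [eq_div_iff hq, inv_mul_eq_iff_eq_mul₀ (by simp [hq, hpm, hΓp])]
    field_simp
    linear_combination -hsq
  have e5 : u - l - 1 = (u - 1) - l := by ring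
  have e6 : 1 - (u - l) - (v + m) = (1 - u - v - m) + l := by ring
  rw [hG', inv_Gamma_sub_nat, Gamma_add_nat_eq v hv, pochC_neg_nat m l hl, e5, e6,
    Complex.cpow_sub _ _ ha', Complex.cpow_add _ _ ha1, Complex.cpow_natCast, Complex.cpow_natCast,
    div_pow]
  have hf : (l.factorial : ℂ) ≠ 0 := by exact_mod_cast l.factorial_ne_zero
  have hsq : ((-1 : ℂ) ^ l) * (-1) ^ l = 1 := by rw [← mul_pow]; simp
  simp only [div_eq_mul_inv, mul_inv]
  have hff : (l.factorial : ℂ) * (l.factorial : ℂ)⁻¹ = 1 := mul_inv_cancel₀ hf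
  generalize (l.factorial : ℂ)⁻¹ = fi at *
  generalize (l.factorial : ℂ) = fl at *
  generalize hε : (-1 : ℂ) ^ l = ε at *
  have h3 : ε * (m.choose l) * (ε * ε) = ε * m.choose l * (fl * fi) := by rw [hsq, hff]
  linear_combination (2 * Real.pi * (pochC (u + v - 1) m * Complex.Gamma (u + v - 1) *
    (pochC (2 - u - v - m) l)⁻¹) * (pochC (1 - u) l * (Complex.Gamma u)⁻¹ *
      ((pochC v m)⁻¹ * (Complex.Gamma v)⁻¹)) * ((a : ℂ) ^ (u - 1) * ((a : ℂ) ^ l)⁻¹ *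
      (((a : ℂ) + 1) ^ (1 - u - v - m) * ((a : ℂ) + 1) ^ l))) * h3

end CauchyBeta

/-- **Differentiated Cauchy beta integral**: for real `a > 0`, `m ∈ ℕ₀`, and `u, v ∈ ℂ`
with `Re u > 0`, `Re v > 0`, `Re(u+v) > m+1`,
`∫_ℝ s^m (1−is)^{−u} (1+ias)^{−v−m} ds = 2π (−i)^m a^{u−1}(a+1)^{1−u−v−m}
 Γ(u+v−1)/(Γ(u)Γ(v)) · (u+v−1)_m/(v)_m · ₂F₁(−m, 1−u; 2−u−v−m; (a+1)/a)`,
with principal-branch complex powers. -/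
theorem cauchy_beta_integral_deriv (a : ℝ) (ha : 0 < a) (m : ℕ) (u v : ℂ)
    (hu : 0 < u.re) (hv : 0 < v.re) (huv : (m : ℝ) + 1 < (u + v).re) :
    ∫ s : ℝ, (s : ℂ) ^ m * (1 - Complex.I * s) ^ (-u) *
        (1 + Complex.I * a * s) ^ (-v - m) =
      2 * Real.pi * (-Complex.I) ^ m * (a : ℂ) ^ (u - 1) *
        ((a : ℂ) + 1) ^ (1 - u - v - m) *
        (Complex.Gamma (u + v - 1) / (Complex.Gamma u * Complex.Gamma v)) *
        (pochC (u + v - 1) m / pochC v m) *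
        hyp2F1TermC m (1 - u) (2 - u - v - m) (((a : ℂ) + 1) / a) := by
  have hm : (0 : ℝ) ≤ m := Nat.cast_nonneg m
  have huv1 : 1 < (u + v).re := by linarith
  have hre : ∀ l ∈ Finset.range (m + 1), 1 < (u - l + (v + m)).re := by
    intro l hl
    have hlm : (l : ℝ) ≤ m := by exact_mod_cast Nat.lt_succ_iff.1 (Finset.mem_range.1 hl)
    simp at huv1 ⊢
    linarith
  simp only [CauchyBeta.integrand_expand]
  rw [integral_finsetSum _ fun (l : ℕ) hl => (CauchyBeta.integrable_cpow_mul_cpow a (-1) ha.ne' (by norm_num)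
    (u - l) (v + m) (hre l hl)).const_mul _, hyp2F1TermC, Finset.mul_sum]
  refine Finset.sum_congr rfl fun l hl => ?_
  have hlm : l ≤ m := Nat.lt_succ_iff.1 (Finset.mem_range.1 hl)
  rw [integral_const_mul, CauchyBeta.cauchy_beta a ha (m + 1) (u - l) (v + m)
    (by
      have : (l : ℝ) ≤ m := by exact_mod_cast hlm
      push_cast; simp; linarith)
    (by simp; linarith) (hre l hl), mul_assoc,
    CauchyBeta.hypergeometric_term_eq a ha m u v hu hv huv1 l hlm]
  ring
end

section
/- Let p ≥ 1 and m = (m₁,…,m_p) ∈ ℕ₀^p with |m| = m₁ + ⋯ + m_p ≥ 2, and write s^m = s₁^{m₁}⋯s_p^{m_p}. If every component m_r is even, then ∫_{ℝ^p} s^m exp(−‖s‖²) ‖s‖^{−(p+1)} ds = [Γ((|m|−1)/2) / Γ((|m| + p)/2)] · Π_{r=1}^p Γ((m_r + 1)/2); if some component m_r is odd, the integral equals 0. -/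
/-!
In polar coordinates the integral of a function homogeneous of degree `d` times a radial function
`g` factors as (integral over the unit sphere) · `∫₀^∞ r^(p-1) r^d g(r) dr`
(`integral_homogeneous_mul_radial`). The spherical factor does not depend on `g`, so it can be
computed from `g(r) = exp (-r²)`, where the integral over `ℝ^p` is also a product of
one-dimensional Gaussian moments (`integral_monomial_gaussian`), and then inserted into the case
`g(r) = exp (-r²) / r^(p+1)`. Writing `σ` for the spherical factor, the two cases read
`∏ ∫ x^(m r) exp (-x²) = σ · Γ((|m|+p)/2)/2` and `I = σ · Γ((|m|-1)/2)/2`.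
For an odd exponent the corresponding one-dimensional moment vanishes, hence so does `σ`.
The factorization holds for Bochner integrals without integrability assumptions.
-/

open MeasureTheory

open Set

/-- Polar coordinates for the product of a homogeneous function and a radial function. -/
lemma integral_homogeneous_mul_radial {E : Type*} [NormedAddCommGroup E] [NormedSpace ℝ E]
    [MeasurableSpace E] [Nontrivial E] [FiniteDimensional ℝ E] [BorelSpace E]
    (μ : Measure E) [μ.IsAddHaarMeasure] (P : E → ℝ) (d : ℕ)
    (hP : ∀ (r : ℝ) (x : E), P (r • x) = r ^ d * P x) (g : ℝ → ℝ) :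
    ∫ x, P x * g ‖x‖ ∂μ =
      (∫ u : Metric.sphere (0 : E) 1, P u ∂μ.toSphere) *
        ∫ r in Ioi (0 : ℝ), r ^ (Module.finrank ℝ E - 1) * (r ^ d * g r) := by
  calc
    ∫ x, P x * g ‖x‖ ∂μ = ∫ x : ({(0)}ᶜ : Set E), P x * g ‖x.1‖ ∂(μ.comap (↑)) := by
      rw [integral_subtype_comap (measurableSet_singleton _).compl fun x ↦ P x * g ‖x‖,
        restrict_compl_singleton]
    _ = ∫ z : Metric.sphere (0 : E) 1 × Ioi (0 : ℝ), P z.1 * (z.2.1 ^ d * g z.2)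
          ∂μ.toSphere.prod (.volumeIoiPow (Module.finrank ℝ E - 1)) := by
      rw [← μ.measurePreserving_homeomorphUnitSphereProd.integral_comp
        (Homeomorph.measurableEmbedding _)]
      refine integral_congr_ae (.of_forall fun x ↦ ?_)
      have hx : ‖x.1‖ ≠ 0 := norm_ne_zero_iff.2 x.2
      have h := hP ‖x.1‖ (‖x.1‖⁻¹ • x.1)
      rw [smul_inv_smul₀ hx] at h
      simp only [homeomorphUnitSphereProd_apply_fst_coe, homeomorphUnitSphereProd_apply_snd_coe]
      rw [h]
      ring
    _ = (∫ u : Metric.sphere (0 : E) 1, P u ∂μ.toSphere) *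
        ∫ r : Ioi (0 : ℝ), r.1 ^ d * g r ∂.volumeIoiPow (Module.finrank ℝ E - 1) :=
      integral_prod_mul (fun u : Metric.sphere (0 : E) 1 ↦ P u)
        (fun r : Ioi (0 : ℝ) ↦ r.1 ^ d * g r)
    _ = _ := by
      congr 1
      simp only [Measure.volumeIoiPow, ENNReal.ofReal]
      rw [integral_withDensity_eq_integral_smul,
        integral_subtype_comap measurableSet_Ioi
          fun a ↦ Real.toNNReal (a ^ (Module.finrank ℝ E - 1)) • (a ^ d * g a),
        setIntegral_congr_fun measurableSet_Ioi fun x hx ↦ ?_]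
      · rw [NNReal.smul_def, Real.coe_toNNReal _ (pow_nonneg hx.out.le _), smul_eq_mul]
      · exact (measurable_subtype_coe.pow_const _).real_toNNReal

lemma integral_Ioi_pow_mul_exp_neg_sq (k : ℕ) :
    ∫ x in Ioi (0 : ℝ), x ^ k * Real.exp (-x ^ 2) = Real.Gamma (((k : ℝ) + 1) / 2) / 2 := by
  have h := integral_rpow_mul_exp_neg_rpow (p := 2) (q := k) two_pos
    (by have : (0 : ℝ) ≤ k := k.cast_nonneg
        linarith)
  simp only [Real.rpow_natCast, Real.rpow_two] at h
  rw [h]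
  ring

lemma integral_even_pow_mul_exp_neg_sq {k : ℕ} (hk : Even k) :
    ∫ x : ℝ, x ^ k * Real.exp (-x ^ 2) = Real.Gamma (((k : ℝ) + 1) / 2) := by
  have h := integral_comp_abs (f := fun x : ℝ ↦ x ^ k * Real.exp (-x ^ 2))
  simp only [hk.pow_abs, sq_abs] at h
  rw [h, integral_Ioi_pow_mul_exp_neg_sq]
  ring

lemma integral_odd_pow_mul_exp_neg_sq {k : ℕ} (hk : Odd k) :
    ∫ x : ℝ, x ^ k * Real.exp (-x ^ 2) = 0 := by
  have h := integral_neg_eq_self (fun x : ℝ ↦ x ^ k * Real.exp (-x ^ 2)) volume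
  simp only [hk.neg_pow, neg_sq, neg_mul, integral_neg] at h
  linarith

lemma integral_monomial_gaussian {p : ℕ} (m : Fin p → ℕ) :
    ∫ s : EuclideanSpace ℝ (Fin p), (∏ r, s r ^ m r) * Real.exp (-‖s‖ ^ 2) =
      ∏ r, ∫ x : ℝ, x ^ m r * Real.exp (-x ^ 2) := by
  rw [← integral_fintype_prod_volume_eq_prod
      (f := fun r (x : ℝ) ↦ x ^ m r * Real.exp (-x ^ 2)),
    ← (PiLp.volume_preserving_toLp (Fin p)).integral_comp
      (MeasurableEquiv.toLp 2 _).measurableEmbedding]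
  refine integral_congr_ae (.of_forall fun x ↦ ?_)
  simp only [EuclideanSpace.norm_sq_eq, Real.norm_eq_abs, sq_abs, Finset.prod_mul_distrib,
    ← Real.exp_sum, Finset.sum_neg_distrib]

/-- The comparison of the singular integral with the regular Gaussian one, obtained by eliminating
the common spherical factor. -/
lemma integral_singular_mul_Gamma {p : ℕ} (hp : 1 ≤ p) (m : Fin p → ℕ) (hm : 2 ≤ ∑ r, m r) :
    (∫ s : EuclideanSpace ℝ (Fin p), (∏ r, s r ^ m r) * Real.exp (-‖s‖ ^ 2) / ‖s‖ ^ (p + 1)) *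
        Real.Gamma ((((∑ r, m r : ℕ) : ℝ) + p) / 2) =
      Real.Gamma ((((∑ r, m r : ℕ) : ℝ) - 1) / 2) *
        ∏ r, ∫ x : ℝ, x ^ m r * Real.exp (-x ^ 2) := by
  have : Nonempty (Fin p) := ⟨⟨0, hp⟩⟩
  have hP : ∀ (r : ℝ) (x : EuclideanSpace ℝ (Fin p)),
      ∏ i, (r • x) i ^ m i = r ^ (∑ i, m i) * ∏ i, x i ^ m i := fun r x ↦ by
    simp [mul_pow, Finset.prod_mul_distrib, Finset.prod_pow_eq_pow_sum]
  have key := integral_homogeneous_mul_radial (volume : Measure (EuclideanSpace ℝ (Fin p)))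
    (fun x ↦ ∏ i, x i ^ m i) _ hP
  have h1 := key (fun r ↦ Real.exp (-r ^ 2))
  have h2 := key (fun r ↦ Real.exp (-r ^ 2) / r ^ (p + 1))
  simp only [finrank_euclideanSpace_fin] at h1 h2
  rw [integral_monomial_gaussian] at h1
  simp only [← mul_div_assoc] at h2
  generalize ∑ r, m r = n at *
  have e1 : ∫ r in Ioi (0 : ℝ), r ^ (p - 1) * (r ^ n * Real.exp (-r ^ 2)) =
      Real.Gamma (((n : ℝ) + p) / 2) / 2 := by
    simp only [← mul_assoc, ← pow_add]
    rw [integral_Ioi_pow_mul_exp_neg_sq]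
    push_cast [hp]
    ring_nf
  have e2 : ∫ r in Ioi (0 : ℝ), r ^ (p - 1) * (r ^ n * Real.exp (-r ^ 2)) / r ^ (p + 1) =
      Real.Gamma (((n : ℝ) - 1) / 2) / 2 := by
    have : ((n - 2 : ℕ) : ℝ) + 1 = n - 1 := by
      push_cast [hm]
      ring
    rw [← this, ← integral_Ioi_pow_mul_exp_neg_sq]
    refine setIntegral_congr_fun measurableSet_Ioi fun r (hr : 0 < r) ↦ ?_
    have e : r ^ (p - 1) * r ^ n = r ^ (n - 2) * r ^ (p + 1) := by
      rw [← pow_add, ← pow_add]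
      congr 1
      omega
    rw [← mul_assoc, e]
    field_simp
  rw [e1] at h1
  rw [e2] at h2
  rw [h1, h2]
  ring

/-- **A singular spherical moment integral**: for `p ≥ 1` and a multi-index
`m ∈ ℕ₀^p` with `|m| ≥ 2`, the integral `∫_{ℝ^p} s^m e^{−‖s‖²} ‖s‖^{−(p+1)} ds` equals
`Γ((|m|−1)/2)/Γ((|m|+p)/2) · Π_r Γ((m_r+1)/2)` if every `m_r` is even, and `0` if some
`m_r` is odd. -/
theorem integral_monomial_gaussian_singular (p : ℕ) (hp : 1 ≤ p) (m : Fin p → ℕ)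
    (hm : 2 ≤ ∑ r, m r) :
    ((∀ r, Even (m r)) →
      ∫ s : EuclideanSpace ℝ (Fin p), (∏ r, s r ^ m r) * Real.exp (-‖s‖ ^ 2) / ‖s‖ ^ (p + 1) =
        Real.Gamma ((((∑ r, m r : ℕ) : ℝ) - 1) / 2) /
          Real.Gamma ((((∑ r, m r : ℕ) : ℝ) + p) / 2) *
          ∏ r, Real.Gamma (((m r : ℝ) + 1) / 2)) ∧
    ((∃ r, ¬ Even (m r)) →
      ∫ s : EuclideanSpace ℝ (Fin p), (∏ r, s r ^ m r) * Real.exp (-‖s‖ ^ 2) / ‖s‖ ^ (p + 1) =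
        0) := by
  have key := integral_singular_mul_Gamma hp m hm
  have hpos : 0 < Real.Gamma ((((∑ r, m r : ℕ) : ℝ) + p) / 2) := by
    apply Real.Gamma_pos_of_pos
    positivity
  refine ⟨fun h ↦ ?_, fun ⟨r, hr⟩ ↦ ?_⟩
  · simp only [fun r ↦ integral_even_pow_mul_exp_neg_sq (h r)] at key
    rw [div_mul_eq_mul_div, eq_div_iff hpos.ne', key]
  · rw [Finset.prod_eq_zero (Finset.mem_univ r)
      (integral_odd_pow_mul_exp_neg_sq (Nat.not_even_iff_odd.1 hr)), mul_zero] at key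
    exact (mul_eq_zero.1 key).resolve_right hpos.ne'
end
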